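/- arXiv:2207.14609 — 9 statements merged into one kernel-verified Lean document; each statement's English description precedes it below -/
import Mathlib

section
/- The function classes Σ_n and Y_n coincide: every f₂ ∈ Y_n can be written in the form f₂(t) = q₁·t + q₀ + Σ_{k=1}^{N} α_k·σ(t − x_k) for all t ∈ ℝ with some N ≤ n, real coefficients q₀, q₁, α₁, …, α_N and strictly ordered knots x₁ < … < x_N; and conversely every s ∈ Σ_n belongs to Y_n. -/
/-- The ReLU function `σ(x) = max(x,0)`. -/
noncomputable def relu (x : ℝ) : ℝ := max x 0

/-- `f` belongs to the shallow ReLU network class `Y_n`. -/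
def IsShallowReLU (n : ℕ) (f : ℝ → ℝ) : Prop :=
  ∃ (a1 a2 b1 : Fin n → ℝ) (c b : ℝ),
    ∀ t, f t = c * t + b + ∑ j, a2 j * relu (a1 j * t + b1 j)

/-- `f` belongs to the CPL spline class `Σ_N` (with exactly `N` strictly ordered knots,
coefficients possibly zero). -/
def IsCPLSpline (N : ℕ) (f : ℝ → ℝ) : Prop :=
  ∃ (q0 q1 : ℝ) (α x : Fin N → ℝ), StrictMono x ∧
    ∀ t, f t = q1 * t + q0 + ∑ k, α k * relu (t - x k)

theorem relu_neuron (a c b : ℝ) : ∃ p1 p0 g x : ℝ, ∀ t,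
    c * relu (a * t + b) = p1 * t + p0 + g * relu (t - x) := by
  have key : a ≠ 0 → ∀ t, a * t + b = a * (t - -(b / a)) := by
    intro h t
    field_simp
    ring
  rcases lt_trichotomy a 0 with h | h | h
  · refine ⟨c * a, c * b, c * (-a), -(b / a), fun t => ?_⟩
    have hk := key h.ne t
    have e : c * a * t + c * b = c * (a * t + b) := by ring
    rw [e, hk]
    generalize t - -(b / a) = u
    unfold relu
    rcases le_total u 0 with hu | hu
    · rw [max_eq_left (mul_nonneg_of_nonpos_of_nonpos h.le hu), max_eq_right hu]; ring
    · rw [max_eq_right (mul_nonpos_of_nonpos_of_nonneg h.le hu), max_eq_left hu]; ring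
  · exact ⟨0, c * relu b, 0, 0, fun t => by subst h; simp⟩
  · refine ⟨0, 0, c * a, -(b / a), fun t => ?_⟩
    rw [key h.ne' t]
    generalize t - -(b / a) = u
    unfold relu
    rcases le_total u 0 with hu | hu
    · rw [max_eq_right (mul_nonpos_of_nonneg_of_nonpos h.le hu), max_eq_right hu]; ring
    · rw [max_eq_left (mul_nonneg h.le hu), max_eq_left hu]; ring

/-- the classes `Σ_n` and `Y_n` coincide. -/
theorem shallow_relu_eq_spline (n : ℕ) :
    (∀ f : ℝ → ℝ, IsShallowReLU n f → ∃ N, N ≤ n ∧ IsCPLSpline N f) ∧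
    (∀ s : ℝ → ℝ, IsCPLSpline n s → IsShallowReLU n s) := by
  classical
  constructor
  · rintro f ⟨a1, a2, b1, c, b, hf⟩
    choose p1 p0 g x hx using fun j => relu_neuron (a1 j) (a2 j) (b1 j)
    let S : Finset ℝ := Finset.univ.image x
    refine ⟨S.card, ?_, b + ∑ j, p0 j, c + ∑ j, p1 j,
      fun k => ∑ j with x j = S.orderEmbOfFin rfl k, g j,
      fun k => S.orderEmbOfFin rfl k, (S.orderEmbOfFin rfl).strictMono, fun t => ?_⟩
    · simpa using (Finset.card_image_le : (Finset.univ.image x).card ≤ _)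
    · have h1 : ∑ k : Fin S.card, (∑ j with x j = S.orderEmbOfFin rfl k, g j) *
            relu (t - S.orderEmbOfFin rfl k)
          = ∑ y ∈ S, (∑ j with x j = y, g j) * relu (t - y) := by
        rw [← Finset.sum_coe_sort S]
        exact Fintype.sum_equiv (S.orderIsoOfFin rfl).toEquiv _ _ (fun k => rfl)
      have h2 : ∑ y ∈ S, (∑ j with x j = y, g j) * relu (t - y)
          = ∑ j, g j * relu (t - x j) := by
        rw [← Finset.sum_fiberwise_of_maps_to (s := Finset.univ) (t := S) (g := x)
          (fun j _ => Finset.mem_image_of_mem x (Finset.mem_univ j))]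
        refine Finset.sum_congr rfl fun y _ => ?_
        rw [Finset.sum_mul]
        refine Finset.sum_congr rfl fun j hj => ?_
        rw [(Finset.mem_filter.mp hj).2]
      rw [h1, h2, hf t]
      simp only [hx, Finset.sum_add_distrib, ← Finset.sum_mul]
      ring
  · rintro s ⟨q0, q1, α, x, -, hs⟩
    exact ⟨fun _ => 1, α, fun k => -x k, q1, q0, fun t => by
      simp only [hs t, one_mul, sub_eq_add_neg]⟩
end

section
/- Let f(t) = c·t + b + Σ_{k=1}^{n} α_k·σ(t − x_k) with strictly ordered knots x₁ < … < x_n, and set x₀ := −∞, x_{n+1} := +∞, μ_k := c + Σ_{ℓ=1}^{k} α_ℓ and η_k := b − Σ_{ℓ=1}^{k} α_ℓ·x_ℓ for k = 0, …, n (so μ₀ = c, η₀ = b). Then for all t ∈ ℝ, σ(f(t)) = c̃·t + b̃ + Σ_{k=1}^{n} α̃_k·σ(t − x_k) + Σ_{ν ∈ S} |μ_ν|·σ(t + η_ν/μ_ν), where S := { ν ∈ {0, …, n} : μ_ν ≠ 0 and −η_ν/μ_ν ∈ (x_ν, x_{ν+1}) }, c̃ = −σ(−c), b̃ = b if c < 0,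 b̃ = σ(b) if c = 0, b̃ = 0 if c > 0, and α̃_k = α_k if f(x_k) > 0, α̃_k = σ(μ_k) + σ(−μ_{k−1}) if f(x_k) = 0, α̃_k = 0 if f(x_k) < 0. In particular, σ∘f is a CPL spline function with at most 2n + 1 knots. -/
lemma relu_of_nonneg {x : ℝ} (h : 0 ≤ x) : relu x = x := max_eq_left h
lemma relu_of_nonpos {x : ℝ} (h : x ≤ 0) : relu x = 0 := max_eq_right h

/-- the kink term with weak condition -/
lemma kink_weak (m e p t : ℝ) :
    (if m ≠ 0 ∧ p ≤ -(e / m) then |m| * relu (t + e / m) else 0) =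
    if 0 < m ∧ m * p + e ≤ 0 then relu (m * t + e) else
    if m < 0 ∧ 0 ≤ m * p + e then relu (-(m * t + e)) else 0 := by
  rcases lt_trichotomy m 0 with h | h | h
  · have h1 : p ≤ -(e / m) ↔ 0 ≤ m * p + e := by
      rw [← neg_div, le_div_iff_of_neg h]
      constructor <;> intro h <;> linarith
    have h2 : |m| * relu (t + e / m) = relu (-(m * t + e)) := by
      have : -(m * t + e) = -m * (t + e / m) := by have := h.ne; field_simp
      rw [this, abs_of_neg h, relu, relu, mul_max_of_nonneg _ _ (by linarith), mul_zero]
    simp [h.ne, h, h.not_gt, h1, h2]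
  · simp [h]
  · have h1 : p ≤ -(e / m) ↔ m * p + e ≤ 0 := by
      rw [← neg_div, le_div_iff₀ h]
      constructor <;> intro h <;> linarith
    have h2 : |m| * relu (t + e / m) = relu (m * t + e) := by
      have : m * t + e = m * (t + e / m) := by field_simp
      rw [this, abs_of_pos h, relu, relu, mul_max_of_nonneg _ _ (by linarith), mul_zero]
    simp [h.ne', h, h.not_gt, h1, h2]

/-- the kink term with strict condition -/
lemma kink_strict (m e p t : ℝ) :
    (if m ≠ 0 ∧ p < -(e / m) then |m| * relu (t + e / m) else 0) =
    if 0 < m ∧ m * p + e < 0 then relu (m * t + e) else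
    if m < 0 ∧ 0 < m * p + e then relu (-(m * t + e)) else 0 := by
  rcases lt_trichotomy m 0 with h | h | h
  · have h1 : p < -(e / m) ↔ 0 < m * p + e := by
      rw [← neg_div, lt_div_iff_of_neg h]
      constructor <;> intro h <;> linarith
    have h2 : |m| * relu (t + e / m) = relu (-(m * t + e)) := by
      have : -(m * t + e) = -m * (t + e / m) := by have := h.ne; field_simp
      rw [this, abs_of_neg h, relu, relu, mul_max_of_nonneg _ _ (by linarith), mul_zero]
    simp [h.ne, h, h.not_gt, h1, h2]
  · simp [h]
  · have h1 : p < -(e / m) ↔ m * p + e < 0 := by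
      rw [← neg_div, lt_div_iff₀ h]
      constructor <;> intro h <;> linarith
    have h2 : |m| * relu (t + e / m) = relu (m * t + e) := by
      have : m * t + e = m * (t + e / m) := by field_simp
      rw [this, abs_of_pos h, relu, relu, mul_max_of_nonneg _ _ (by linarith), mul_zero]
    simp [h.ne', h, h.not_gt, h1, h2]

lemma relu_ident (x : ℝ) : relu x - relu (-x) = x := by
  rcases le_total 0 x with h | h
  · rw [relu_of_nonneg h, relu_of_nonpos (by linarith)]; ring
  · rw [relu_of_nonpos h, relu_of_nonneg (by linarith)]; ring

/-- scalar step, right of the knot -/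
lemma step_scalar (m m' v s : ℝ) (hs : 0 ≤ s) :
    relu (v + m' * s) = relu (v + m * s)
      - (if 0 < m ∧ v ≤ 0 then relu (v + m * s) else
          if m < 0 ∧ 0 ≤ v then relu (-(v + m * s)) else 0)
      + (if 0 < v then m' - m else if v = 0 then relu m' + relu (-m) else 0) * s
      + (if 0 < m' ∧ v < 0 then relu (v + m' * s) else
          if m' < 0 ∧ 0 < v then relu (-(v + m' * s)) else 0) := by
  have e1 := relu_ident (v + m * s)
  have e2 := relu_ident (v + m' * s)
  rcases lt_trichotomy v 0 with h | h | h
  · have a1 : m ≤ 0 → relu (v + m * s) = 0 := fun hm => relu_of_nonpos (by nlinarith)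
    have a2 : m' ≤ 0 → relu (v + m' * s) = 0 := fun hm => relu_of_nonpos (by nlinarith)
    by_cases hm : 0 < m <;> by_cases hm' : 0 < m' <;>
      simp [h, h.le, h.not_gt, h.not_ge, h.ne, hm, hm'] <;>
      simp only [not_lt] at hm hm' <;> simp_all
  · subst h
    simp only [zero_add, lt_irrefl, le_refl, and_true, and_false, if_true, if_false] at *
    have b : ∀ y : ℝ, relu (y * s) = relu y * s := fun y => by
      rw [relu, relu, max_mul_of_nonneg _ _ hs, zero_mul]
    rw [← neg_mul, b, b, b]
    rcases lt_trichotomy m 0 with hm | hm | hm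
    · simp [hm, hm.not_gt, relu_of_nonpos hm.le]; ring
    · simp [hm, relu]
    · simp [hm, hm.not_gt, relu_of_nonpos (show -m ≤ 0 by linarith)]
  · have a1 : 0 ≤ m → relu (-(v + m * s)) = 0 := fun hm => relu_of_nonpos (by nlinarith)
    have a2 : 0 ≤ m' → relu (-(v + m' * s)) = 0 := fun hm => relu_of_nonpos (by nlinarith)
    by_cases hm : m < 0 <;> by_cases hm' : m' < 0 <;>
      simp only [h, h.le, h.not_gt, h.not_ge, h.ne', hm, hm', and_true, and_false, if_true, if_false] <;>
      (try simp only [not_lt] at hm hm') <;> first | linarith [a1 hm, a2 hm'] | linarith [a1 hm] | linarith [a2 hm'] | linarith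

/-- one induction step -/
lemma step_full (m m' e e' a p t F : ℝ) (hm : m' = m + a) (he : e' = e - a * p)
    (hF : p ≤ t → F = m * t + e) :
    relu (F + a * relu (t - p)) = relu F
      - (if m ≠ 0 ∧ p ≤ -(e / m) then |m| * relu (t + e / m) else 0)
      + (if 0 < m * p + e then a else if m * p + e = 0 then relu m' + relu (-m) else 0)
          * relu (t - p)
      + (if m' ≠ 0 ∧ p < -(e' / m') then |m'| * relu (t + e' / m') else 0) := by
  rcases le_total p t with h | h
  · rw [hF h, relu_of_nonneg (show 0 ≤ t - p by linarith), kink_weak, kink_strict]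
    have := step_scalar m m' (m * p + e) (t - p) (by linarith)
    have h1 : m * p + e + m' * (t - p) = m * t + e + a * (t - p) := by rw [hm]; ring
    have h2 : m * p + e + m * (t - p) = m * t + e := by ring
    have h3 : m' * p + e' = m * p + e := by rw [hm, he]; ring
    have h4 : m' * t + e' = m * t + e + a * (t - p) := by rw [hm, he]; ring
    have h5 : m' - m = a := by rw [hm]; ring
    rw [h1, h2, h5] at this
    rw [h3, h4]; exact this
  · rw [relu_of_nonpos (show t - p ≤ 0 by linarith)]
    have k1 : (if m ≠ 0 ∧ p ≤ -(e / m) then |m| * relu (t + e / m) else 0) = 0 := by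
      split_ifs with hc
      · rw [relu_of_nonpos (by linarith [hc.2]), mul_zero]
      · rfl
    have k2 : (if m' ≠ 0 ∧ p < -(e' / m') then |m'| * relu (t + e' / m') else 0) = 0 := by
      split_ifs with hc
      · rw [relu_of_nonpos (by linarith [hc.2]), mul_zero]
      · rfl
    rw [k1, k2]; simp

lemma base_case (c b t : ℝ) :
    relu (c * t + b) = (-(relu (-c))) * t
      + (if c < 0 then b else if c = 0 then relu b else 0)
      + (if c ≠ 0 then |c| * relu (t + b / c) else 0) := by
  rcases lt_trichotomy c 0 with h | h | h
  · have := kink_weak c b (-(b / c)) t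
    have h0 : c * -(b / c) + b = 0 := by rw [mul_neg, mul_div_cancel₀ _ (by first | exact h.ne | exact h.ne')]; ring
    simp only [le_refl, and_true, h0, h, h.not_gt, if_true, if_false] at this
    rw [this, relu_of_nonneg (show 0 ≤ -c by linarith)]
    simp only [h, if_true]
    linarith [relu_ident (c * t + b)]
  · simp [h, relu]
  · have := kink_weak c b (-(b / c)) t
    have h0 : c * -(b / c) + b = 0 := by rw [mul_neg, mul_div_cancel₀ _ (by first | exact h.ne | exact h.ne')]; ring
    simp only [le_refl, and_true, h0, h, h.not_gt, if_true, if_false] at this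
    rw [this, relu_of_nonpos (show -c ≤ 0 by linarith)]
    simp [h.ne', h.not_gt]

/-- The formula for natural-number indexed data, after `m` knots. -/
lemma formula_nat (n : ℕ) (c b : ℝ) (α x : ℕ → ℝ) (hx : ∀ i j, i < j → j < n → x i < x j)
    (μ η : ℕ → ℝ) (hμ : ∀ k, k ≤ n → μ k = c + ∑ i ∈ Finset.range k, α i)
    (hη : ∀ k, k ≤ n → η k = b - ∑ i ∈ Finset.range k, α i * x i)
    (X : ℕ → EReal) (hX0 : X 0 = ⊥) (hXmid : ∀ k, k < n → X (k + 1) = (x k : ℝ))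
    (m : ℕ) (hm : m ≤ n) (t : ℝ) :
    relu (c * t + b + ∑ k ∈ Finset.range m, α k * relu (t - x k)) =
      (-(relu (-c))) * t
      + (if c < 0 then b else if c = 0 then relu b else 0)
      + (∑ k ∈ Finset.range m, (if 0 < μ k * x k + η k then α k
          else if μ k * x k + η k = 0 then relu (μ (k + 1)) + relu (-(μ k))
          else 0) * relu (t - x k))
      + (∑ ν ∈ Finset.range m, if μ ν ≠ 0 ∧ X ν < ((-(η ν / μ ν) : ℝ) : EReal) ∧
          ((-(η ν / μ ν) : ℝ) : EReal) < X (ν + 1) then |μ ν| * relu (t + η ν / μ ν) else 0)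
      + (if μ m ≠ 0 ∧ X m < ((-(η m / μ m) : ℝ) : EReal) then
          |μ m| * relu (t + η m / μ m) else 0) := by
  induction m with
  | zero =>
    have h1 : μ 0 = c := by simp [hμ]
    have h2 : η 0 = b := by simp [hη]
    have := base_case c b t
    simp only [Finset.range_zero, Finset.sum_empty, add_zero, h1, h2, hX0, EReal.bot_lt_coe,
      and_true]
    exact this
  | succ m ih =>
    have hmn : m < n := hm
    have ih := ih hmn.le
    have e1 : μ (m + 1) = μ m + α m := by
      rw [hμ _ hm, hμ _ hmn.le, Finset.sum_range_succ]; ring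
    have e2 : η (m + 1) = η m - α m * x m := by
      rw [hη _ hm, hη _ hmn.le, Finset.sum_range_succ]; ring
    have hF : x m ≤ t →
        c * t + b + ∑ k ∈ Finset.range m, α k * relu (t - x k) = μ m * t + η m := by
      intro ht
      have : ∑ k ∈ Finset.range m, α k * relu (t - x k)
          = ∑ k ∈ Finset.range m, (α k * t - α k * x k) := by
        refine Finset.sum_congr rfl fun k hk => ?_
        have := hx k m (Finset.mem_range.1 hk) hmn
        rw [relu_of_nonneg (by linarith)]; ring
      rw [this, hμ _ hmn.le, hη _ hmn.le, Finset.sum_sub_distrib, ← Finset.sum_mul]; ring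
    have st := step_full (μ m) (μ (m+1)) (η m) (η (m+1)) (α m) (x m) t _ e1 e2 hF
    have hXm : X m < (x m : EReal) := by
      cases m with
      | zero => rw [hX0]; exact EReal.bot_lt_coe _
      | succ k =>
        rw [hXmid k (by omega)]
        exact EReal.coe_lt_coe_iff.2 (hx _ _ (by omega) hmn)
    have key : (if μ m ≠ 0 ∧ X m < ((-(η m / μ m) : ℝ) : EReal) then
          |μ m| * relu (t + η m / μ m) else 0)
        = (if μ m ≠ 0 ∧ x m ≤ -(η m / μ m) then |μ m| * relu (t + η m / μ m) else 0)
        + (if μ m ≠ 0 ∧ X m < ((-(η m / μ m) : ℝ) : EReal) ∧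
          ((-(η m / μ m) : ℝ) : EReal) < X (m + 1) then |μ m| * relu (t + η m / μ m) else 0) := by
      rw [hXmid m hmn]
      simp only [EReal.coe_lt_coe_iff]
      by_cases h : x m ≤ -(η m / μ m)
      · have : X m < ((-(η m / μ m) : ℝ) : EReal) :=
          lt_of_lt_of_le hXm (EReal.coe_le_coe_iff.2 h)
        simp only [this, h, h.not_gt, and_true, and_false, if_false, add_zero]
      · simp only [h, lt_of_not_ge h, and_true, and_false, if_false, zero_add]
    rw [Finset.sum_range_succ, ← add_assoc, st, ih, key, Finset.sum_range_succ,
      Finset.sum_range_succ, hXmid m hmn]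
    simp only [EReal.coe_lt_coe_iff]
    ring

lemma spline_of_sum {ι : Type*} (s : Finset ι) (q0 q1 : ℝ) (a y : ι → ℝ) (g : ℝ → ℝ)
    (hg : ∀ t, g t = q1 * t + q0 + ∑ i ∈ s, a i * relu (t - y i)) :
    ∃ N, N ≤ s.card ∧ IsCPLSpline N g := by
  classical
  let T := s.image y
  refine ⟨T.card, Finset.card_image_le, q0, q1,
    fun k => ∑ i ∈ s with y i = T.orderEmbOfFin rfl k, a i, T.orderEmbOfFin rfl,
    (T.orderEmbOfFin rfl).strictMono, fun t => ?_⟩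
  rw [hg]
  congr 1
  rw [← Finset.sum_fiberwise_of_maps_to (g := y) (t := T)
    (fun i hi => Finset.mem_image_of_mem y hi)]
  have h := Finset.sum_image (s := Finset.univ) (g := T.orderEmbOfFin rfl)
    (f := fun p => ∑ i ∈ s with y i = p, a i * relu (t - y i))
    (fun i _ j _ h => (T.orderEmbOfFin rfl).injective h)
  rw [Finset.image_orderEmbOfFin_univ] at h
  rw [h]
  refine Finset.sum_congr rfl fun k _ => ?_
  rw [Finset.sum_mul]
  refine Finset.sum_congr rfl fun i hi => ?_
  rw [(Finset.mem_filter.1 hi).2]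

/-- explicit CPL spline representation of `σ ∘ f` for a CPL spline `f`
with `n` knots.  Knots are indexed by `Fin n` (the Lean index `k` corresponds to the
paper's knot `x_{k+1}`), `μ k` and `η k` (for `k = 0,…,n`) are the slopes and offsets
of `f` on `(x_k, x_{k+1})`, and `X : ℕ → EReal` is the extension of the knots with
`X 0 = -∞`, `X (n+1) = +∞`. -/
theorem relu_comp_spline (n : ℕ) (c b : ℝ) (α x : Fin n → ℝ) (hx : StrictMono x)
    (f : ℝ → ℝ) (hf : ∀ t, f t = c * t + b + ∑ k, α k * relu (t - x k))
    (μ η : ℕ → ℝ)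
    (hμ : ∀ k, μ k = c + ∑ i : Fin n, if (i : ℕ) < k then α i else 0)
    (hη : ∀ k, η k = b - ∑ i : Fin n, if (i : ℕ) < k then α i * x i else 0)
    (X : ℕ → EReal)
    (hX0 : X 0 = ⊥)
    (hXmid : ∀ k : Fin n, X ((k : ℕ) + 1) = (x k : ℝ))
    (hXtop : X (n + 1) = ⊤)
    (S : Finset ℕ)
    (hS : ∀ ν, ν ∈ S ↔ ν ≤ n ∧ μ ν ≠ 0 ∧
      X ν < ((-(η ν / μ ν) : ℝ) : EReal) ∧ ((-(η ν / μ ν) : ℝ) : EReal) < X (ν + 1)) :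
    (∀ t, relu (f t) =
      (-(relu (-c))) * t
      + (if c < 0 then b else if c = 0 then relu b else 0)
      + (∑ k : Fin n, (if 0 < f (x k) then α k
          else if f (x k) = 0 then relu (μ ((k : ℕ) + 1)) + relu (-(μ (k : ℕ)))
          else 0) * relu (t - x k))
      + ∑ ν ∈ S, |μ ν| * relu (t + η ν / μ ν)) ∧
    ∃ N, N ≤ 2 * n + 1 ∧ IsCPLSpline N (fun t => relu (f t)) := by
  have main : ∀ t, relu (f t) =
      (-(relu (-c))) * t
      + (if c < 0 then b else if c = 0 then relu b else 0)
      + (∑ k : Fin n, (if 0 < f (x k) then α k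
          else if f (x k) = 0 then relu (μ ((k : ℕ) + 1)) + relu (-(μ (k : ℕ)))
          else 0) * relu (t - x k))
      + ∑ ν ∈ S, |μ ν| * relu (t + η ν / μ ν) := by
    intro t
    let α' : ℕ → ℝ := fun k => if h : k < n then α ⟨k, h⟩ else 0
    let x' : ℕ → ℝ := fun k => if h : k < n then x ⟨k, h⟩ else 0
    have hα' : ∀ k : Fin n, α' k = α k := fun k => by simp [α']
    have hx' : ∀ k : Fin n, x' k = x k := fun k => by simp [x']
    have hsum : ∀ (k : ℕ), k ≤ n → ∀ (g : ℕ → ℝ) (G : Fin n → ℝ), (∀ i : Fin n, g i = G i) →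
        (∑ i : Fin n, if (i : ℕ) < k then G i else 0) = ∑ i ∈ Finset.range k, g i := by
      intro k hk g G hgG
      simp only [← hgG]
      rw [Fin.sum_univ_eq_sum_range (fun i => if i < k then g i else 0), ← Finset.sum_filter]
      congr 1
      ext i
      simp only [Finset.mem_filter, Finset.mem_range]
      omega
    have hmono : ∀ i j, i < j → j < n → x' i < x' j := by
      intro i j hij hj
      have := @hx ⟨i, by omega⟩ ⟨j, hj⟩ hij
      simpa [x', hj, hij.trans hj] using this
    have hμ' : ∀ k, k ≤ n → μ k = c + ∑ i ∈ Finset.range k, α' i := fun k hk => by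
      rw [hμ, hsum k hk α' α hα']
    have hη' : ∀ k, k ≤ n → η k = b - ∑ i ∈ Finset.range k, α' i * x' i := fun k hk => by
      rw [hη, hsum k hk (fun i => α' i * x' i) (fun i => α i * x i)
        (fun i => by simp only [hα', hx'])]
    have hX' : ∀ k, k < n → X (k + 1) = (x' k : ℝ) := fun k hk => by
      have := hXmid ⟨k, hk⟩
      simpa [x', hk] using this
    have hfx : ∀ k : Fin n, f (x k) = μ k * x' k + η k := by
      intro k
      rw [hf, hμ, hη, hx', add_mul, Finset.sum_mul]
      have : ∑ i, α i * relu (x k - x i) = ∑ i : Fin n, ((if (i : ℕ) < k then α i else 0) * x k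
          - if (i : ℕ) < k then α i * x i else 0) := by
        refine Finset.sum_congr rfl fun i _ => ?_
        split_ifs with h
        · have := @hx i k h
          rw [relu_of_nonneg (by linarith)]; ring
        · have := hx.monotone (show k ≤ i from not_lt.1 h)
          rw [relu_of_nonpos (by linarith)]; ring
      rw [this, Finset.sum_sub_distrib]; ring
    have F := formula_nat n c b α' x' hmono μ η hμ' hη' X hX0 hX' n le_rfl t
    have s1 : f t = c * t + b + ∑ k ∈ Finset.range n, α' k * relu (t - x' k) := by
      rw [hf, ← Fin.sum_univ_eq_sum_range (fun k => α' k * relu (t - x' k))]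
      simp only [hα', hx']
    rw [s1, F, ← Fin.sum_univ_eq_sum_range (fun k => (if 0 < μ k * x' k + η k then α' k
          else if μ k * x' k + η k = 0 then relu (μ (k + 1)) + relu (-(μ k))
          else 0) * relu (t - x' k)), add_assoc _ (∑ ν ∈ Finset.range n, _)]
    congr 1
    · congr 1
      refine Finset.sum_congr rfl fun k _ => ?_
      rw [hfx, hα', hx']
    · have hSeq : S = (Finset.range (n + 1)).filter (fun ν => μ ν ≠ 0 ∧
          X ν < ((-(η ν / μ ν) : ℝ) : EReal) ∧ ((-(η ν / μ ν) : ℝ) : EReal) < X (ν + 1)) := by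
        ext ν
        rw [hS, Finset.mem_filter, Finset.mem_range, Nat.lt_succ_iff]
      rw [hSeq, Finset.sum_filter, Finset.sum_range_succ, hXtop]
      simp only [EReal.coe_lt_top, and_true]
  refine ⟨main, ?_⟩
  have hcard : S.card ≤ n + 1 := by
    have : S ⊆ Finset.range (n + 1) := fun ν hν => by
      have := ((hS ν).1 hν).1
      simp only [Finset.mem_range]; omega
    simpa using Finset.card_le_card this
  obtain ⟨N, hN, h⟩ := spline_of_sum ((Finset.univ : Finset (Fin n)).disjSum S)
    (if c < 0 then b else if c = 0 then relu b else 0) (-(relu (-c)))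
    (Sum.elim (fun k : Fin n => (if 0 < f (x k) then α k
          else if f (x k) = 0 then relu (μ ((k : ℕ) + 1)) + relu (-(μ (k : ℕ)))
          else 0)) (fun ν => |μ ν|))
    (Sum.elim x (fun ν => -(η ν / μ ν))) (fun t => relu (f t)) (fun t => by
      rw [Finset.sum_disjSum]
      simp only [Sum.elim_inl, Sum.elim_inr, sub_neg_eq_add]
      rw [main t]; ring)
  refine ⟨N, ?_, h⟩
  rw [Finset.card_disjSum, Finset.card_univ, Fintype.card_fin] at hN
  omega
end

section
/- Let f(t) = c·t + b + Σ_{k=1}^{n} α_k·σ(t − x_k) with strictly ordered knots x₁ < … < x_n. Then the set of points at which the composition σ∘f : ℝ → ℝ is not differentiable has at most n + 1 + ⌊(n+1)/2⌋ elements. -/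
/-- Local slope of the spline at `t`. -/
noncomputable def splineSlope (n : ℕ) (c : ℝ) (α x : Fin n → ℝ) (t : ℝ) : ℝ :=
  c + ∑ k, if x k < t then α k else 0

/-- The knots to the left of `t`. -/
noncomputable def leftKnots (n : ℕ) (x : Fin n → ℝ) (t : ℝ) : Finset (Fin n) :=
  Finset.univ.filter (fun k => x k < t)

theorem spline_cell (n : ℕ) (c b : ℝ) (α x : Fin n → ℝ)
    (f : ℝ → ℝ) (hf : ∀ t, f t = c * t + b + ∑ k, α k * relu (t - x k)) (t s : ℝ)
    (h1 : ∀ k, x k < t → x k ≤ s) (h2 : ∀ k, ¬ x k < t → s ≤ x k) :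
    f s = f t + splineSlope n c α x t * (s - t) := by
  have key : ∑ k, α k * relu (s - x k)
      = ∑ k, α k * relu (t - x k) + (∑ k, if x k < t then α k else 0) * (s - t) := by
    rw [Finset.sum_mul, ← Finset.sum_add_distrib]
    refine Finset.sum_congr rfl fun k _ => ?_
    unfold relu
    by_cases h : x k < t
    · rw [max_eq_left (by linarith [h1 k h]), max_eq_left (by linarith), if_pos h]; ring
    · rw [max_eq_right (by linarith [h2 k h]), max_eq_right (by linarith), if_neg h]; ring
  rw [hf s, hf t, key, splineSlope]; ring

theorem spline_cont (n : ℕ) (c b : ℝ) (α x : Fin n → ℝ)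
    (f : ℝ → ℝ) (hf : ∀ t, f t = c * t + b + ∑ k, α k * relu (t - x k)) : Continuous f := by
  have : f = fun t => c * t + b + ∑ k, α k * relu (t - x k) := funext hf
  rw [this]; unfold relu; fun_prop

theorem diff_of_neg (f : ℝ → ℝ) (hc : Continuous f) (t : ℝ) (h : f t < 0) :
    DifferentiableAt ℝ (fun s => relu (f s)) t := by
  have h1 : ∀ᶠ s in nhds t, f s < 0 := hc.continuousAt.eventually_lt continuousAt_const h
  have h2 : (fun s => relu (f s)) =ᶠ[nhds t] fun _ => (0 : ℝ) := by
    filter_upwards [h1] with s hs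
    exact max_eq_right hs.le
  exact (differentiableAt_const _).congr_of_eventuallyEq h2

theorem nondiff_off_knot (n : ℕ) (c b : ℝ) (α x : Fin n → ℝ)
    (f : ℝ → ℝ) (hf : ∀ t, f t = c * t + b + ∑ k, α k * relu (t - x k)) (t : ℝ)
    (ht : ∀ k, x k ≠ t) (hd : ¬ DifferentiableAt ℝ (fun s => relu (f s)) t) :
    f t = 0 ∧ splineSlope n c α x t ≠ 0 := by
  have hc := spline_cont n c b α x f hf
  have hloc : ∀ᶠ s in nhds t, f s = f t + splineSlope n c α x t * (s - t) := by
    have : ∀ᶠ s in nhds t, ∀ k, (x k < t → x k ≤ s) ∧ (¬ x k < t → s ≤ x k) := by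
      rw [Filter.eventually_all]
      intro k
      rcases lt_or_gt_of_ne (ht k) with h | h
      · filter_upwards [lt_mem_nhds h] with s hs
        exact ⟨fun _ => hs.le, fun h' => absurd h h'⟩
      · filter_upwards [gt_mem_nhds h] with s hs
        exact ⟨fun h' => absurd h' h.not_gt, fun _ => hs.le⟩
    filter_upwards [this] with s hs
    exact spline_cell n c b α x f hf t s (fun k => (hs k).1) (fun k => (hs k).2)
  have h0 : f t = 0 := by
    rcases lt_trichotomy (f t) 0 with h | h | h
    · exact absurd (diff_of_neg f hc t h) hd
    · exact h
    · exfalso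
      apply hd
      have h1 : ∀ᶠ s in nhds t, 0 < f s := continuousAt_const.eventually_lt hc.continuousAt h
      have h2 : (fun s => relu (f s)) =ᶠ[nhds t]
          fun s => f t + splineSlope n c α x t * (s - t) := by
        filter_upwards [h1, hloc] with s hs hs'
        rw [← hs']; exact max_eq_left hs.le
      refine DifferentiableAt.congr_of_eventuallyEq ?_ h2
      fun_prop
  refine ⟨h0, fun hA => hd ?_⟩
  have h2 : (fun s => relu (f s)) =ᶠ[nhds t] fun _ => (0 : ℝ) := by
    filter_upwards [hloc] with s hs
    rw [hs, h0, hA]; simp [relu]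
  exact (differentiableAt_const _).congr_of_eventuallyEq h2

theorem piece_mem (n : ℕ) (c b : ℝ) (α x : Fin n → ℝ) (hx : StrictMono x)
    (f : ℝ → ℝ) (hf : ∀ t, f t = c * t + b + ∑ k, α k * relu (t - x k)) (t : ℝ)
    (ht : ∀ k, x k ≠ t) (h0 : f t = 0) (hA : splineSlope n c α x t ≠ 0) :
    (leftKnots n x t).card = 0 ∨ (leftKnots n x t).card = n ∨
      ∃ k, f (x k) < 0 ∧
        ((leftKnots n x t).card = k.val ∨ (leftKnots n x t).card = k.val + 1) := by
  rcases (leftKnots n x t).eq_empty_or_nonempty with he | hne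
  · left; simp [he]
  rcases ((leftKnots n x t)ᶜ).eq_empty_or_nonempty with he | hne'
  · right; left
    rw [Finset.compl_eq_empty_iff] at he
    simp [he]
  right; right
  obtain ⟨m, hm, hmax⟩ := (leftKnots n x t).exists_max_image id hne
  obtain ⟨m', hm', hmin⟩ := ((leftKnots n x t)ᶜ).exists_min_image id hne'
  have mem : ∀ k, k ∈ leftKnots n x t ↔ x k < t := by simp [leftKnots]
  simp only [Finset.mem_compl, mem, id] at hm hm' hmax hmin
  have c1 : (leftKnots n x t).card = m.val + 1 := by
    have : leftKnots n x t = Finset.Iic m := by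
      ext k
      rw [mem, Finset.mem_Iic]
      exact ⟨hmax k, fun h => lt_of_le_of_lt (hx.monotone h) hm⟩
    rw [this, Fin.card_Iic]
  have c2 : (leftKnots n x t).card = m'.val := by
    have : leftKnots n x t = Finset.Iio m' := by
      ext k
      rw [mem, Finset.mem_Iio]
      constructor
      · intro h
        by_contra h'
        exact hm' (lt_of_le_of_lt (hx.monotone (not_lt.mp h')) h)
      · intro h
        by_contra h'
        exact absurd (hmin k h') (not_le.mpr h)
    rw [this, Fin.card_Iio]
  have hm2 : t < x m' := lt_of_le_of_ne (not_lt.mp hm') (ht m').symm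
  have e1 := spline_cell n c b α x f hf t (x m) (fun k hk => hx.monotone (hmax k hk))
    (fun k hk => hm.le.trans (not_lt.mp hk))
  have e2 := spline_cell n c b α x f hf t (x m') (fun k hk => hk.le.trans hm2.le)
    (fun k hk => hx.monotone (hmin k hk))
  rw [h0, zero_add] at e1 e2
  rcases lt_or_gt_of_ne hA with h | h
  · refine ⟨m', ?_, Or.inl c2⟩
    rw [e2]; exact mul_neg_of_neg_of_pos h (by linarith)
  · refine ⟨m, ?_, Or.inr c1⟩
    rw [e1]; exact mul_neg_of_pos_of_neg h (by linarith)

/-- for a CPL spline `f` with `n` knots, the composition `σ ∘ f` has at most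
`n + 1 + ⌊(n+1)/2⌋` points of non-differentiability. -/
theorem relu_comp_spline_nondiff_card (n : ℕ) (c b : ℝ) (α x : Fin n → ℝ)
    (hx : StrictMono x)
    (f : ℝ → ℝ) (hf : ∀ t, f t = c * t + b + ∑ k, α k * relu (t - x k)) :
    {t : ℝ | ¬ DifferentiableAt ℝ (fun s => relu (f s)) t}.encard
      ≤ ((n + 1 + (n + 1) / 2 : ℕ) : ℕ∞) := by
  classical
  have hc := spline_cont n c b α x f hf
  set N : Finset (Fin n) := Finset.univ.filter (fun k => f (x k) < 0) with hN
  set Z : Set ℝ := {t | (∀ k, x k ≠ t) ∧ ¬ DifferentiableAt ℝ (fun s => relu (f s)) t} with hZ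
  set p : ℝ → ℕ := fun t => (leftKnots n x t).card with hp
  set T : Finset ℕ := Finset.range (n + 1) ∩
    (({0, n} : Finset ℕ) ∪ (N.image (fun k => k.val) ∪ N.image (fun k => k.val + 1))) with hT
  have hsub : {t : ℝ | ¬ DifferentiableAt ℝ (fun s => relu (f s)) t}
      ⊆ ((Nᶜ).image x : Set ℝ) ∪ Z := by
    intro t ht
    by_cases h : ∀ k, x k ≠ t
    · exact Or.inr ⟨h, ht⟩
    · push Not at h
      obtain ⟨k, rfl⟩ := h
      left
      rw [Finset.mem_coe]
      refine Finset.mem_image_of_mem x ?_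
      rw [Finset.mem_compl, hN, Finset.mem_filter]
      exact fun hk => ht (diff_of_neg f hc _ hk.2)
  have hlt : ∀ t ∈ Z, ∀ t' ∈ Z, t < t' → p t ≠ p t' := by
    intro t ht t' ht' hlt heq
    have hs : leftKnots n x t ⊆ leftKnots n x t' := by
      intro k
      simp only [leftKnots, Finset.mem_filter, Finset.mem_univ, true_and]
      exact fun h => h.trans hlt
    have hE := Finset.eq_of_subset_of_card_le hs heq.ge
    obtain ⟨a1, a2⟩ := nondiff_off_knot n c b α x f hf t ht.1 ht.2
    obtain ⟨b1, -⟩ := nondiff_off_knot n c b α x f hf t' ht'.1 ht'.2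
    have e := spline_cell n c b α x f hf t t' (fun k hk => (hk.trans hlt).le) (by
      intro k hk
      have : k ∉ leftKnots n x t := by simpa [leftKnots] using hk
      rw [hE] at this
      simpa [leftKnots] using this)
    rw [a1, b1, zero_add] at e
    exact mul_ne_zero a2 (by linarith) e.symm
  have hinj : Set.InjOn p Z := by
    intro t ht t' ht' h
    rcases lt_trichotomy t t' with h' | h' | h'
    · exact absurd h (hlt t ht t' ht' h')
    · exact h'
    · exact absurd h.symm (hlt t' ht' t ht h')
  have himg : p '' Z ⊆ (T : Set ℕ) := by
    rintro _ ⟨t, ht, rfl⟩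
    obtain ⟨a1, a2⟩ := nondiff_off_knot n c b α x f hf t ht.1 ht.2
    have hle : p t ≤ n := by
      simpa using Finset.card_le_univ (leftKnots n x t)
    rw [Finset.mem_coe, hT, Finset.mem_inter]
    refine ⟨Finset.mem_range.mpr (by omega), ?_⟩
    simp only [Finset.mem_union, Finset.mem_insert, Finset.mem_singleton, Finset.mem_image]
    rcases piece_mem n c b α x hx f hf t ht.1 a1 a2 with h | h | ⟨k, hk, h | h⟩
    · exact Or.inl (Or.inl h)
    · exact Or.inl (Or.inr h)
    · exact Or.inr (Or.inl ⟨k, by simp [hN, hk], h.symm⟩)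
    · exact Or.inr (Or.inr ⟨k, by simp [hN, hk], h.symm⟩)
  have hZc : Z.encard ≤ (T.card : ℕ∞) := by
    rw [← hinj.encard_image, ← Set.encard_coe_eq_coe_finsetCard]
    exact Set.encard_le_encard himg
  have hT1 : T.card ≤ n + 1 := by
    have h := Finset.card_le_card (Finset.inter_subset_left : T ⊆ Finset.range (n + 1))
    rwa [Finset.card_range] at h
  have hT2 : T.card ≤ 2 + (N.card + N.card) :=
    (Finset.card_le_card Finset.inter_subset_right).trans
      ((Finset.card_union_le _ _).trans (add_le_add Finset.card_le_two
        ((Finset.card_union_le _ _).trans (add_le_add Finset.card_image_le Finset.card_image_le))))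
  have hNc : (Nᶜ).card + N.card = n := by
    have := Finset.card_compl_add_card N
    simpa using this
  have hI : ((Nᶜ).image x).card ≤ (Nᶜ).card := Finset.card_image_le
  calc _ ≤ (((Nᶜ).image x : Set ℝ) ∪ Z).encard := Set.encard_le_encard hsub
    _ ≤ ((Nᶜ).image x : Set ℝ).encard + Z.encard := Set.encard_union_le _ _
    _ ≤ (((Nᶜ).image x).card : ℕ∞) + (T.card : ℕ∞) := by
        rw [Set.encard_coe_eq_coe_finsetCard]
        exact add_le_add le_rfl hZc
    _ ≤ _ := by
        rw [← Nat.cast_add]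
        exact Nat.cast_le.mpr (by omega)
end

section
/- Let n₁ ≥ 1, n₂ ≥ 2, and let f₃ ∈ Y_{n₁,n₂} with a_k^(1) ≠ 0 for all k = 1, …, n₁ and with the points −b_k^(1)/a_k^(1) pairwise distinct. Then f₃ can be represented for all t ∈ ℝ as f₃(t) = q₁·t + q₀ + Σ_{ℓ=1}^{n₁} α_ℓ·σ(t − x_ℓ) + Σ_{j=1}^{n₂} Σ_{ν=0}^{n₁} α_{j,ν}·σ(t − x_{j,ν}), where x₁ < x₂ < … < x_{n₁} is the increasing rearrangement of the points −b_k^(1)/a_k^(1), the α_ℓ, α_{j,ν}, x_{j,ν} are real numbers, and (with the convention x₀ := −∞ and x_{n₁+1} := +∞) every breakpoint x_{j,ν} with α_{j,ν} ≠ 0 satisfies x_{j,ν} ∈ (x_ν, x_{ν+1}). -/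
lemma relu_mul_nonneg {a : ℝ} (h : 0 ≤ a) (x : ℝ) : relu (a * x) = a * relu x := by
  unfold relu
  rw [mul_max_of_nonneg _ _ h, mul_zero]

lemma relu_neg_eq (x : ℝ) : relu x = x + relu (-x) := by
  rcases le_total 0 x with h | h
  · rw [relu_of_nonneg h, relu_of_nonpos (by linarith)]; ring
  · rw [relu_of_nonpos h, relu_of_nonneg (by linarith)]; ring

/-- A single unit in normal form. -/
lemma relu_affine (a b : ℝ) (ha : a ≠ 0) :
    ∃ p q c : ℝ, ∀ t, relu (a * t + b) = p * t + q + c * relu (t - (-b / a)) := by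
  rcases lt_or_gt_of_ne ha with h | h
  · refine ⟨a, b, -a, fun t => ?_⟩
    rw [relu_neg_eq, ← relu_mul_nonneg (by linarith)]
    congr 2
    field_simp
    ring
  · refine ⟨0, 0, a, fun t => ?_⟩
    rw [← relu_mul_nonneg h.le, zero_mul, zero_add, zero_add]
    congr 1
    field_simp
    ring

/-- ReLU of an affine function on a half line. -/
lemma relu_half (m c y : ℝ) : ∃ s A X : ℝ, (A ≠ 0 → y < X) ∧ y ≤ X ∧
    ∀ t, y ≤ t → relu (m * (t - y) + c) = relu c + s * (t - y) + A * relu (t - X) := by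
  rcases lt_trichotomy m 0 with hm | hm | hm
  · rcases le_or_gt c 0 with hc | hc
    · refine ⟨0, 0, y, by simp, le_rfl, fun t ht => ?_⟩
      rw [relu_of_nonpos hc, relu_of_nonpos (by nlinarith)]; ring
    · have hX : y < y - c / m := by
        have := div_neg_of_pos_of_neg hc hm
        linarith
      refine ⟨m, -m, y - c / m, fun _ => hX, hX.le, fun t ht => ?_⟩
      rw [relu_of_nonneg hc.le, relu_neg_eq, ← relu_mul_nonneg (by linarith)]
      have : -(m * (t - y) + c) = -m * (t - (y - c / m)) := by
        have hm' : m ≠ 0 := hm.ne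
        field_simp
        ring
      rw [this]; ring
  · refine ⟨0, 0, y, by simp, le_rfl, fun t ht => ?_⟩
    simp [hm]
  · rcases le_or_gt 0 c with hc | hc
    · refine ⟨m, 0, y, by simp, le_rfl, fun t ht => ?_⟩
      rw [relu_of_nonneg hc, relu_of_nonneg (by nlinarith)]; ring
    · have hX : y < y - c / m := by
        have := div_neg_of_neg_of_pos hc hm
        linarith
      refine ⟨0, m, y - c / m, fun _ => hX, hX.le, fun t ht => ?_⟩
      rw [relu_of_nonpos hc.le, ← relu_mul_nonneg hm.le]
      have : (m * (t - y) + c) = m * (t - (y - c / m)) := by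
        field_simp
        ring
      rw [this]; ring

lemma spline_affine_right {n : ℕ} (x β : Fin n → ℝ) (y : ℝ)
    (h : ∀ i, β i ≠ 0 → x i < y) (t : ℝ) (ht : y ≤ t) :
    ∑ i, β i * relu (t - x i) = ∑ i, β i * relu (y - x i) + (∑ i, β i) * (t - y) := by
  rw [Finset.sum_mul, ← Finset.sum_add_distrib]
  refine Finset.sum_congr rfl fun i _ => ?_
  by_cases hb : β i = 0
  · simp [hb]
  · have := h i hb
    rw [relu_of_nonneg (by linarith), relu_of_nonneg (by linarith)]; ring

lemma relu_spline (n : ℕ) : ∀ (x β : Fin n → ℝ) (p q : ℝ), StrictMono x →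
    ∃ (q1 q0 : ℝ) (α : Fin n → ℝ) (A X : Fin (n + 1) → ℝ),
      (∀ t, relu (p * t + q + ∑ i, β i * relu (t - x i)) =
        q1 * t + q0 + ∑ i, α i * relu (t - x i) + ∑ ν, A ν * relu (t - X ν)) ∧
      (∀ ν, A ν ≠ 0 →
        (∀ i : Fin n, (i : ℕ) + 1 = (ν : ℕ) → x i < X ν) ∧
        (∀ i : Fin n, (i : ℕ) = (ν : ℕ) → X ν < x i)) := by
  induction n with
  | zero =>
    intro x β p q _
    by_cases hp : p = 0
    · exact ⟨0, relu q, 0, 0, 0, by simp [hp], by simp⟩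
    · obtain ⟨q1, q0, c, h⟩ := relu_affine p q hp
      exact ⟨q1, q0, 0, fun _ => c, fun _ => -q / p, by simpa using h,
        fun ν _ => ⟨fun i => i.elim0, fun i => i.elim0⟩⟩
  | succ n ih =>
    intro x β p q hx
    obtain ⟨q1, q0, α, A, X, hR, hI⟩ := ih (fun i => x i.castSucc) (fun i => β i.castSucc) p q
      (fun i j h => hx (Fin.castSucc_lt_castSucc_iff.2 h))
    set y := x (Fin.last n) with hy
    have hxy : ∀ i : Fin n, x i.castSucc < y := fun i => hx (Fin.castSucc_lt_last i)
    set B : Fin (n + 1) → ℝ := fun ν => if X ν < y then A ν else 0 with hB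
    have hBX : ∀ ν, B ν ≠ 0 → X ν < y ∧ A ν ≠ 0 := by
      intro ν h
      by_cases h' : X ν < y
      · exact ⟨h', by simpa [hB, h'] using h⟩
      · simp [hB, h'] at h
    have hBl : ∀ t ≤ y, ∑ ν, A ν * relu (t - X ν) = ∑ ν, B ν * relu (t - X ν) := by
      intro t ht
      refine Finset.sum_congr rfl fun ν _ => ?_
      by_cases h' : X ν < y
      · simp [hB, h']
      · rw [relu_of_nonpos (by linarith)]; simp
    set c := p * y + q + ∑ i : Fin n, β i.castSucc * relu (y - x i.castSucc) with hc
    obtain ⟨s, D, Z, hD, hyZ, hs⟩ :=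
      relu_half (p + ∑ i : Fin n, β i.castSucc + β (Fin.last n)) c y
    refine ⟨q1, q0, Fin.snoc (α := fun _ => ℝ) α (s - q1 - ∑ i, α i - ∑ ν, B ν),
      Fin.snoc (α := fun _ => ℝ) B D, Fin.snoc (α := fun _ => ℝ) X Z, ?_, ?_⟩
    · intro t
      simp only [Fin.sum_univ_castSucc (n := n + 1), Fin.snoc_castSucc, Fin.snoc_last]
      rw [Fin.sum_univ_castSucc, Fin.sum_univ_castSucc]
      simp only [Fin.snoc_castSucc, Fin.snoc_last, ← hy]
      rcases le_total t y with ht | ht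
      · rw [relu_of_nonpos (show t - y ≤ 0 by linarith),
          relu_of_nonpos (show t - Z ≤ 0 by linarith), ← hBl t ht]
        simpa using hR t
      · have e1 := spline_affine_right (fun i : Fin n => x i.castSucc)
          (fun i => β i.castSucc) y (fun i _ => hxy i) t ht
        have e2 := spline_affine_right (fun i : Fin n => x i.castSucc) α y
          (fun i _ => hxy i) t ht
        have e3 := spline_affine_right X B y (fun i h => (hBX i h).1) t ht
        have e4 := hR y
        rw [hBl y le_rfl, ← hc] at e4
        have e5 := hs t ht
        rw [e4] at e5
        rw [relu_of_nonneg (show 0 ≤ t - y by linarith), e1, e2, e3]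
        have e6 : p * t + q + (∑ i : Fin n, β i.castSucc * relu (y - x i.castSucc) +
            (∑ i : Fin n, β i.castSucc) * (t - y) + β (Fin.last n) * (t - y)) =
            (p + ∑ i : Fin n, β i.castSucc + β (Fin.last n)) * (t - y) + c := by
          rw [hc]; ring
        rw [e6, e5]; ring
    · intro ν
      refine Fin.lastCases ?_ (fun ν => ?_) ν
      · simp only [Fin.snoc_last, Fin.val_last]
        intro h
        refine ⟨fun i hi => ?_, fun i hi => by omega⟩
        have : i = Fin.last n := Fin.ext (by simp; omega)
        rw [this]; exact hD h
      · simp only [Fin.snoc_castSucc, Fin.val_castSucc]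
        intro h
        obtain ⟨h1, h2⟩ := hBX ν h
        obtain ⟨h3, h4⟩ := hI ν h2
        refine ⟨fun i => ?_, fun i => ?_⟩
        · refine Fin.lastCases ?_ (fun i => ?_) i
          · intro hi; simp at hi; omega
          · intro hi; exact h3 i (by simpa using hi)
        · refine Fin.lastCases ?_ (fun i => ?_) i
          · intro _; exact h1
          · intro hi; exact h4 i (by simpa using hi)

/-- a two-hidden-layer ReLU network `f₃ ∈ Y_{n₁,n₂}` (with nonvanishing
first-layer weights and pairwise distinct ratios) is a CPL spline whose first-layer knots
`x₁ < … < x_{n₁}` are the increasing rearrangement of the points `-b_k^(1)/a_k^(1)`, and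
whose active second-layer knots `x_{j,ν}` lie in the open interval `(x_ν, x_{ν+1})`
(with the conventions `x₀ = -∞` and `x_{n₁+1} = +∞`).  Here the Lean index `i : Fin n₁`
corresponds to the paper's knot `x_{i+1}`, and `ν : Fin (n₁+1)` to the paper's `ν ∈ {0,…,n₁}`;
the interval condition `x_{j,ν} ∈ (x_ν, x_{ν+1})` is expressed by the two universally
quantified implications below. -/
theorem two_layer_spline_structure (n1 n2 : ℕ) (hn1 : 1 ≤ n1) (hn2 : 2 ≤ n2)
    (a1 b1 : Fin n1 → ℝ) (a2 : Fin n2 → Fin n1 → ℝ) (c2 b2 a3 : Fin n2 → ℝ)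
    (c3 b3 : ℝ)
    (ha1 : ∀ k, a1 k ≠ 0)
    (hdist : Function.Injective fun k => -(b1 k) / a1 k)
    (f : ℝ → ℝ)
    (hf : ∀ t, f t = c3 * t + b3 +
      ∑ j, a3 j * relu ((∑ k, a2 j k * relu (a1 k * t + b1 k)) + c2 j * t + b2 j)) :
    ∃ (q0 q1 : ℝ) (x α : Fin n1 → ℝ) (A XX : Fin n2 → Fin (n1 + 1) → ℝ),
      StrictMono x ∧
      Set.range x = Set.range (fun k => -(b1 k) / a1 k) ∧
      (∀ t, f t = q1 * t + q0 + (∑ ℓ, α ℓ * relu (t - x ℓ))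
        + ∑ j, ∑ ν, A j ν * relu (t - XX j ν)) ∧
      (∀ j ν, A j ν ≠ 0 →
        (∀ i : Fin n1, (i : ℕ) + 1 = (ν : ℕ) → x i < XX j ν) ∧
        (∀ i : Fin n1, (i : ℕ) = (ν : ℕ) → XX j ν < x i)) := by
  set r : Fin n1 → ℝ := fun k => -(b1 k) / a1 k with hr
  set τ := Tuple.sort r with hτ
  have hx : StrictMono (r ∘ τ) :=
    (Tuple.monotone_sort r).strictMono_of_injective (hdist.comp τ.injective)
  choose p q c hu using fun k => relu_affine (a1 k) (b1 k) (ha1 k)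
  choose Q1 Q0 α A X hR hI using fun j => relu_spline n1 (r ∘ τ)
    (fun i => a2 j (τ i) * c (τ i)) ((∑ k, a2 j k * p k) + c2 j)
    ((∑ k, a2 j k * q k) + b2 j) hx
  refine ⟨b3 + ∑ j, a3 j * Q0 j, c3 + ∑ j, a3 j * Q1 j, r ∘ τ, fun i => ∑ j, a3 j * α j i,
    fun j ν => a3 j * A j ν, X, hx, ?_, ?_, ?_⟩
  · exact τ.surjective.range_comp r
  · intro t
    have key : ∀ j, relu ((∑ k, a2 j k * relu (a1 k * t + b1 k)) + c2 j * t + b2 j) =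
        Q1 j * t + Q0 j + ∑ i, α j i * relu (t - (r ∘ τ) i)
          + ∑ ν, A j ν * relu (t - X j ν) := by
      intro j
      rw [← hR j t]
      congr 1
      have e := Equiv.sum_comp τ (fun k => a2 j k * c k * relu (t - r k))
      simp only [Function.comp]
      rw [e]
      have : ∑ k, a2 j k * relu (a1 k * t + b1 k) = (∑ k, a2 j k * p k) * t +
          (∑ k, a2 j k * q k) + ∑ k, a2 j k * c k * relu (t - r k) := by
        rw [Finset.sum_mul, ← Finset.sum_add_distrib, ← Finset.sum_add_distrib]
        refine Finset.sum_congr rfl fun k _ => ?_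
        rw [hu k t]; ring
      rw [this]; ring
    have e2 : ∑ i, (∑ j, a3 j * α j i) * relu (t - (r ∘ τ) i) =
        ∑ j, a3 j * ∑ i, α j i * relu (t - (r ∘ τ) i) := by
      simp only [Finset.sum_mul, Finset.mul_sum]
      rw [Finset.sum_comm]
      simp only [mul_assoc]
    rw [hf t, e2]
    simp only [key, mul_add, Finset.sum_add_distrib, add_mul, Finset.sum_mul, Finset.mul_sum,
      mul_assoc]
    ring
  · intro j ν h
    exact hI j ν (right_ne_zero_of_mul h)
end

section
/- For n₁ ≥ 1 and n₂ ≥ 1, every f₃ ∈ Y_{n₁,n₂} is a continuous piecewise linear spline function with at most n₁·n₂ + n₁ + n₂ breakpoints; that is, Y_{n₁,n₂} ⊆ Σ_N with N = (n₁+1)(n₂+1) − 1. -/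
/-- `f` belongs to the two-hidden-layer ReLU network class `Y_{n₁,n₂}`. -/
def IsReLU2 (n1 n2 : ℕ) (f : ℝ → ℝ) : Prop :=
  ∃ (a1 b1 : Fin n1 → ℝ) (a2 : Fin n2 → Fin n1 → ℝ) (c2 b2 a3 : Fin n2 → ℝ)
    (c3 b3 : ℝ),
    ∀ t, f t = c3 * t + b3 +
      ∑ j, a3 j * relu ((∑ k, a2 j k * relu (a1 k * t + b1 k)) + c2 j * t + b2 j)

/-- `f` is a spline with knots in the finite set `S`. -/
def Spl (S : Finset ℝ) (f : ℝ → ℝ) : Prop :=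
  ∃ (q0 q1 : ℝ) (α : ℝ → ℝ), ∀ t, f t = q1 * t + q0 + ∑ x ∈ S, α x * relu (t - x)

lemma Spl.mono {S T : Finset ℝ} {f : ℝ → ℝ} (h : Spl S f) (hST : S ⊆ T) : Spl T f := by
  classical
  obtain ⟨q0, q1, α, h⟩ := h
  refine ⟨q0, q1, fun x => if x ∈ S then α x else 0, fun t => ?_⟩
  rw [h t]
  congr 1
  rw [← Finset.sum_subset hST]
  · apply Finset.sum_congr rfl
    intro x hx
    simp [hx]
  · intro x _ hx
    simp [hx]

lemma Spl.add {S : Finset ℝ} {f g : ℝ → ℝ} (hf : Spl S f) (hg : Spl S g) :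
    Spl S (fun t => f t + g t) := by
  obtain ⟨q0, q1, α, hf⟩ := hf
  obtain ⟨r0, r1, β, hg⟩ := hg
  refine ⟨q0 + r0, q1 + r1, fun x => α x + β x, fun t => ?_⟩
  simp only [hf t, hg t, add_mul, Finset.sum_add_distrib]
  ring

lemma Spl.smul {S : Finset ℝ} {f : ℝ → ℝ} (c : ℝ) (hf : Spl S f) :
    Spl S (fun t => c * f t) := by
  obtain ⟨q0, q1, α, hf⟩ := hf
  refine ⟨c * q0, c * q1, fun x => c * α x, fun t => ?_⟩
  simp only [hf t, mul_add, Finset.mul_sum, mul_assoc]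

lemma Spl.affine (S : Finset ℝ) (q1 q0 : ℝ) : Spl S (fun t => q1 * t + q0) :=
  ⟨q0, q1, fun _ => 0, fun t => by simp⟩

lemma Spl.single (z : ℝ) : Spl {z} (fun t => relu (t - z)) :=
  ⟨0, 0, fun _ => 1, fun t => by simp⟩

lemma Spl.sum {ι : Type*} {S : Finset ℝ} (s : Finset ι) {f : ι → ℝ → ℝ}
    (hf : ∀ i, Spl S (f i)) : Spl S (fun t => ∑ i ∈ s, f i t) := by
  classical
  induction s using Finset.induction_on with
  | empty => simpa using Spl.affine S 0 0
  | insert a s ha ih =>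
    simp only [Finset.sum_insert ha]
    exact (hf a).add ih

lemma relu_affine_s5 (a b : ℝ) : ∃ z, Spl {z} (fun t => relu (a * t + b)) := by
  rcases lt_trichotomy a 0 with h | h | h
  · refine ⟨-b / a, ?_⟩
    have := (Spl.affine {-b / a} a b).add ((Spl.single (-b / a)).smul (-a))
    convert this using 2 with t
    have e : a * t + b = a * (t - -b / a) := by
      have h0 := h.ne
      field_simp; ring
    rw [e]
    rcases le_total 0 (t - -b / a) with h' | h'
    · rw [relu_of_nonneg h', relu_of_nonpos (by nlinarith)]; ring
    · rw [relu_of_nonpos h', relu_of_nonneg (by nlinarith)]; ring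
  · subst h
    refine ⟨0, ?_⟩
    have := Spl.affine {0} 0 (relu b)
    simpa using this
  · refine ⟨-b / a, ?_⟩
    have := (Spl.single (-b / a)).smul a
    convert this using 2 with t
    have e : a * t + b = a * (t - -b / a) := by field_simp; ring
    rw [e]
    rcases le_total 0 (t - -b / a) with h' | h'
    · rw [relu_of_nonneg h', relu_of_nonneg (by positivity)]
    · rw [relu_of_nonpos h', relu_of_nonpos (by nlinarith)]; ring

lemma relu_half_s5 (x A B : ℝ) : ∃ β γ z : ℝ, x ≤ z ∧ ∀ t, x ≤ t →
    relu (A * (t - x) + B) = relu B + β * (t - x) + γ * relu (t - z) := by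
  rcases le_total 0 B with hB | hB
  · rcases le_or_gt 0 A with hA | hA
    · refine ⟨A, 0, x, le_rfl, fun t ht => ?_⟩
      rw [relu_of_nonneg hB, relu_of_nonneg (by nlinarith)]; ring
    · refine ⟨A, -A, x + B / (-A), ?_, fun t ht => ?_⟩
      · have : 0 ≤ B / (-A) := div_nonneg hB (by linarith)
        linarith
      · have e : A * (t - x) + B = A * (t - (x + B / (-A))) := by
          have h0 := hA.ne
          field_simp; ring
        rw [relu_of_nonneg hB]
        rcases le_total 0 (t - (x + B / (-A))) with h' | h'
        · rw [relu_of_nonneg h', e, relu_of_nonpos (by nlinarith)]; linarith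
        · rw [relu_of_nonpos h', e, relu_of_nonneg (by nlinarith)]; linarith
  · rcases le_or_gt A 0 with hA | hA
    · refine ⟨0, 0, x, le_rfl, fun t ht => ?_⟩
      rw [relu_of_nonpos hB, relu_of_nonpos (by nlinarith)]; ring
    · refine ⟨0, A, x + (-B) / A, ?_, fun t ht => ?_⟩
      · have : 0 ≤ (-B) / A := div_nonneg (by linarith) hA.le
        linarith
      · have e : A * (t - x) + B = A * (t - (x + (-B) / A)) := by field_simp; ring
        rw [relu_of_nonpos hB]
        rcases le_total 0 (t - (x + (-B) / A)) with h' | h'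
        · rw [relu_of_nonneg h', e, relu_of_nonneg (by positivity)]; ring
        · rw [relu_of_nonpos h', e, relu_of_nonpos (by nlinarith)]; ring

/-- A spline whose knots are all at most `x` is affine to the right of `x`. -/
lemma Spl.affine_right {S : Finset ℝ} {f : ℝ → ℝ} (hf : Spl S f) (x : ℝ)
    (hS : ∀ y ∈ S, y ≤ x) : ∃ C, ∀ t, x ≤ t → f t = C * (t - x) + f x := by
  obtain ⟨q0, q1, α, hf⟩ := hf
  refine ⟨q1 + ∑ y ∈ S, α y, fun t ht => ?_⟩
  have h1 : ∀ s, x ≤ s → ∑ y ∈ S, α y * relu (s - y) = ∑ y ∈ S, α y * (s - y) := by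
    intro s hs
    apply Finset.sum_congr rfl
    intro y hy
    rw [relu_of_nonneg (by linarith [hS y hy])]
  rw [hf t, hf x, h1 t ht, h1 x le_rfl]
  have : ∑ y ∈ S, α y * (t - y) = (∑ y ∈ S, α y) * (t - x) + ∑ y ∈ S, α y * (x - y) := by
    rw [Finset.sum_mul, ← Finset.sum_add_distrib]
    apply Finset.sum_congr rfl
    intro y _
    ring
  rw [this]; ring

lemma Spl.trunc {S : Finset ℝ} {f : ℝ → ℝ} (hf : Spl S f) (x : ℝ) :
    ∃ g, Spl (S.filter (· < x)) g ∧ ∀ t, t ≤ x → g t = f t := by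
  obtain ⟨q0, q1, α, hf⟩ := hf
  refine ⟨_, ⟨q0, q1, α, fun t => rfl⟩, fun t ht => ?_⟩
  rw [hf t]
  congr 1
  apply Finset.sum_subset (Finset.filter_subset _ _)
  intro y hy hy'
  have : x ≤ y := by
    by_contra hc
    exact hy' (Finset.mem_filter.2 ⟨hy, not_le.1 hc⟩)
  rw [relu_of_nonpos (by linarith), mul_zero]

lemma Spl.relu_comp (S : Finset ℝ) : ∀ g : ℝ → ℝ, Spl S g →
    ∃ Z : Finset ℝ, Z.card ≤ S.card + 1 ∧ Spl (S ∪ Z) (fun t => relu (g t)) := by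
  classical
  induction S using Finset.induction_on_max with
  | empty =>
    rintro g ⟨q0, q1, α, hg⟩
    obtain ⟨z, hz⟩ := relu_affine_s5 q1 q0
    refine ⟨{z}, by simp, ?_⟩
    simpa [hg] using hz
  | insert x S hx ih =>
    intro g hg
    have hxS : x ∉ S := fun h => lt_irrefl _ (hx x h)
    obtain ⟨g', hg', hgg⟩ := hg.trunc x
    have hfil : (insert x S).filter (· < x) ⊆ S := by
      intro y hy
      simp only [Finset.mem_filter, Finset.mem_insert] at hy
      rcases hy.1 with h | h
      · exact absurd hy.2 (by simp [h])
      · exact h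
    obtain ⟨Z, hZ, hr⟩ := ih g' (hg'.mono hfil)
    obtain ⟨k, hk, hkr⟩ := hr.trunc x
    obtain ⟨C, hC⟩ := hk.affine_right x (fun y hy => (Finset.mem_filter.1 hy).2.le)
    obtain ⟨A, hA⟩ := hg.affine_right x (by
      intro y hy
      rcases Finset.mem_insert.1 hy with h | h
      · exact h.le
      · exact (hx y h).le)
    obtain ⟨β, γ, z, hz, hβ⟩ := relu_half_s5 x A (g x)
    refine ⟨insert z Z, ?_, ?_⟩
    · rw [Finset.card_insert_of_notMem hxS]
      exact (Finset.card_insert_le _ _).trans (by omega)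
    · have h1 : Spl (insert x S ∪ insert z Z) k := hk.mono (by
        intro y hy
        have := (Finset.mem_filter.1 hy).1
        simp only [Finset.mem_union, Finset.mem_insert] at this ⊢
        tauto)
      have h2 : Spl (insert x S ∪ insert z Z) (fun t => relu (t - x)) :=
        (Spl.single x).mono (by simp)
      have h3 : Spl (insert x S ∪ insert z Z) (fun t => relu (t - z)) :=
        (Spl.single z).mono (by simp)
      convert (h1.add (h2.smul (β - C))).add (h3.smul γ) using 2 with t
      rcases le_total t x with ht | ht
      · rw [relu_of_nonpos (x := t - x) (by linarith),
          relu_of_nonpos (x := t - z) (by linarith), hkr t ht, hgg t ht]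
        ring
      · rw [relu_of_nonneg (x := t - x) (by linarith), hA t ht, hβ t ht, hC t ht,
          hkr x le_rfl, hgg x le_rfl]
        ring

lemma Spl.toCPL {S : Finset ℝ} {f : ℝ → ℝ} (hf : Spl S f) : IsCPLSpline S.card f := by
  obtain ⟨q0, q1, α, hf⟩ := hf
  refine ⟨q0, q1, fun i => α (S.orderEmbOfFin rfl i), S.orderEmbOfFin rfl,
    (S.orderEmbOfFin rfl).strictMono, fun t => ?_⟩
  rw [hf t]
  congr 1
  have := Finset.sum_map Finset.univ (S.orderEmbOfFin rfl).toEmbedding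
    (fun y => α y * relu (t - y))
  rw [Finset.map_orderEmbOfFin_univ] at this
  exact this

/-- `Y_{n₁,n₂} ⊆ Σ_N` with `N = (n₁+1)(n₂+1) − 1`. -/
theorem two_layer_subset_spline (n1 n2 : ℕ) (hn1 : 1 ≤ n1) (hn2 : 1 ≤ n2)
    (f : ℝ → ℝ) (hf : IsReLU2 n1 n2 f) :
    ∃ N, N ≤ (n1 + 1) * (n2 + 1) - 1 ∧ IsCPLSpline N f := by
  classical
  obtain ⟨a1, b1, a2, c2, b2, a3, c3, b3, hf⟩ := hf
  choose z hz using fun k => relu_affine_s5 (a1 k) (b1 k)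
  set S : Finset ℝ := Finset.univ.image z with hS
  have hSc : S.card ≤ n1 := by
    simpa using (Finset.card_image_le (s := Finset.univ) (f := z))
  have hg : ∀ j, Spl S (fun t =>
      (∑ k, a2 j k * relu (a1 k * t + b1 k)) + (c2 j * t + b2 j)) := fun j =>
    (Spl.sum _ (fun k => ((hz k).mono (by simp [hS])).smul (a2 j k))).add (Spl.affine _ _ _)
  choose Z hZ hr using fun j => Spl.relu_comp S _ (hg j)
  set T : Finset ℝ := S ∪ Finset.univ.biUnion Z with hT
  have hTc : T.card ≤ n1 + n2 * (n1 + 1) := by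
    refine (Finset.card_union_le _ _).trans (add_le_add hSc ?_)
    have := Finset.card_biUnion_le_card_mul Finset.univ Z (n1 + 1)
      (fun j _ => (hZ j).trans (by omega))
    simpa using this
  refine ⟨T.card, ?_, Spl.toCPL ?_⟩
  · have : (n1 + 1) * (n2 + 1) = n1 + n2 * (n1 + 1) + 1 := by ring
    omega
  · have h := (Spl.affine T c3 b3).add (Spl.sum Finset.univ (fun j =>
      ((hr j).mono (Finset.union_subset_union_right
        (Finset.subset_biUnion_of_mem Z (Finset.mem_univ j)))).smul (a3 j)))
    convert h using 2 with t
    rw [hf t]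
    simp only [add_assoc]
end

section
/- Every f₃ ∈ Y_{n₁,n₂} can be written in the normalized form f₃(t) = c^(3)·t + b^(3) + A^(3)·σ( A^(2)·σ(t·𝟙 − x) + s·t + b^(2) ) for all t ∈ ℝ, where A^(3) ∈ ℝ^{1×n₂}, A^(2) ∈ ℝ^{n₂×n₁}, b^(2) ∈ ℝ^{n₂}, x ∈ ℝ^{n₁} with strictly increasing entries x₁ < x₂ < … < x_{n₁}, b^(3), c^(3) ∈ ℝ, 𝟙 = (1, …, 1)ᵀ ∈ ℝ^{n₁}, and s ∈ {−1, 0, 1}^{n₂} is a sign vector; here σ is applied componentwise to vectors. -/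
theorem relu_scale (c x : ℝ) (hc : 0 ≤ c) : relu (c * x) = c * relu x := by
  unfold relu
  rw [mul_max_of_nonneg _ _ hc, mul_zero]

theorem relu_neg_add (x : ℝ) : relu x = relu (-x) + x := by
  unfold relu
  rcases le_total x 0 with h | h
  · rw [max_eq_right h, max_eq_left (by linarith)]; ring
  · rw [max_eq_left h, max_eq_right (by linarith)]; ring

theorem relu_affine_form (a b : ℝ) :
    ∃ y m p q : ℝ, ∀ t, relu (a * t + b) = m * relu (t - y) + p * t + q := by
  rcases lt_trichotomy a 0 with h | h | h
  · refine ⟨-b / a, -a, a, b, fun t => ?_⟩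
    rw [relu_neg_add, ← relu_scale _ _ (by linarith : 0 ≤ -a)]
    have : -(a * t + b) = -a * (t - -b / a) := by
      field_simp [h.ne]
      ring
    rw [this]; ring
  · refine ⟨0, 0, 0, relu b, fun t => ?_⟩
    simp [h]
  · refine ⟨-b / a, a, 0, 0, fun t => ?_⟩
    rw [← relu_scale _ _ h.le]
    have : a * t + b = a * (t - -b / a) := by
      field_simp [h.ne']
      ring
    rw [this]; ring

theorem relu_outer_form {n : ℕ} (x D : Fin n → ℝ) (C B a : ℝ) :
    ∃ (A : ℝ) (E : Fin n → ℝ) (b s : ℝ), (s = -1 ∨ s = 0 ∨ s = 1) ∧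
      ∀ t, a * relu ((∑ k, D k * relu (t - x k)) + C * t + B) =
        A * relu ((∑ k, E k * relu (t - x k)) + s * t + b) := by
  by_cases hC : C = 0
  · exact ⟨a, D, B, 0, by simp, fun t => by rw [hC]⟩
  · have hp : 0 < |C| := abs_pos.mpr hC
    refine ⟨a * |C|, fun k => D k / |C|, B / |C|, C / |C|, ?_, fun t => ?_⟩
    · rcases lt_or_gt_of_ne hC with h | h
      · left; rw [abs_of_neg h]; field_simp
      · right; right; rw [abs_of_pos h]; field_simp
    · rw [mul_assoc, ← relu_scale _ _ hp.le, mul_add, mul_add, Finset.mul_sum]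
      congr 3
      · congr 1
        · refine Finset.sum_congr rfl fun k _ => ?_
          field_simp
        · field_simp
      · field_simp

theorem knots_exist {n : ℕ} (y : Fin n → ℝ) :
    ∃ (x : Fin n → ℝ) (r : Fin n → Fin n), StrictMono x ∧ ∀ k, y k = x (r k) := by
  classical
  have hc : (Finset.univ.image y).card ≤ n := by
    simpa using Finset.card_image_le (s := Finset.univ) (f := y)
  obtain ⟨T, hT, hcard⟩ := Infinite.exists_superset_card_eq (Finset.univ.image y) n hc
  have : ∀ k, ∃ i, y k = T.orderEmbOfFin hcard i := by
    intro k
    have hk : y k ∈ Set.range (T.orderEmbOfFin hcard) := by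
      rw [Finset.range_orderEmbOfFin]
      exact hT (Finset.mem_image_of_mem y (Finset.mem_univ k))
    obtain ⟨i, hi⟩ := hk
    exact ⟨i, hi.symm⟩
  choose r hr using this
  exact ⟨T.orderEmbOfFin hcard, r, (T.orderEmbOfFin hcard).strictMono, hr⟩

/-- every `f₃ ∈ Y_{n₁,n₂}` has a normalized representation
`f₃(t) = c³·t + b³ + A³·σ(A²·σ(t·𝟙 − x) + s·t + b²)` with strictly increasing knots `x`
and a sign vector `s ∈ {−1,0,1}^{n₂}`. -/
theorem two_layer_normalized_form (n1 n2 : ℕ) (f : ℝ → ℝ) (hf : IsReLU2 n1 n2 f) :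
    ∃ (A3 : Fin n2 → ℝ) (A2 : Fin n2 → Fin n1 → ℝ) (b2 : Fin n2 → ℝ)
      (x : Fin n1 → ℝ) (b3 c3 : ℝ) (s : Fin n2 → ℝ),
      StrictMono x ∧
      (∀ j, s j = -1 ∨ s j = 0 ∨ s j = 1) ∧
      ∀ t, f t = c3 * t + b3 +
        ∑ j, A3 j * relu ((∑ k, A2 j k * relu (t - x k)) + s j * t + b2 j) := by
  classical
  obtain ⟨a1, b1, a2, c2, b2, a3, c3, b3, hf⟩ := hf
  choose y m p q hy using fun k => relu_affine_form (a1 k) (b1 k)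
  obtain ⟨x, r, hx, hr⟩ := knots_exist y
  have inner : ∀ j t, (∑ k, a2 j k * relu (a1 k * t + b1 k)) + c2 j * t + b2 j =
      (∑ i, (∑ k, if r k = i then a2 j k * m k else 0) * relu (t - x i)) +
        ((∑ k, a2 j k * p k) + c2 j) * t + ((∑ k, a2 j k * q k) + b2 j) := by
    intro j t
    have h1 : (∑ i, (∑ k, if r k = i then a2 j k * m k else 0) * relu (t - x i)) =
        ∑ k, a2 j k * m k * relu (t - x (r k)) := by
      simp_rw [Finset.sum_mul]
      rw [Finset.sum_comm]
      refine Finset.sum_congr rfl fun k _ => ?_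
      simp [ite_mul]
    have h2 : (∑ k, a2 j k * relu (a1 k * t + b1 k)) =
        (∑ k, a2 j k * m k * relu (t - x (r k))) + (∑ k, a2 j k * p k) * t
          + ∑ k, a2 j k * q k := by
      rw [Finset.sum_mul, ← Finset.sum_add_distrib, ← Finset.sum_add_distrib]
      refine Finset.sum_congr rfl fun k _ => ?_
      rw [hy, hr]; ring
    rw [h1, h2]; ring
  choose A E b s hs hA using fun j => relu_outer_form x
    (fun i => ∑ k, if r k = i then a2 j k * m k else 0)
    ((∑ k, a2 j k * p k) + c2 j) ((∑ k, a2 j k * q k) + b2 j) (a3 j)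
  refine ⟨A, E, b, x, b3, c3, s, hx, hs, fun t => ?_⟩
  rw [hf]
  congr 1
  refine Finset.sum_congr rfl fun j _ => ?_
  rw [inner, hA]
end

section
/- Let n₁ ≥ 1 and n₂ ≥ 2, and let y₁ < y₂ < … < y_N be N = (n₁+1)(n₂+1) − 1 pairwise distinct real numbers. Then there exists a function f₃ ∈ Y_{n₁,n₂} such that the set of points at which f₃ is not differentiable is exactly {y₁, …, y_N}; in other words, f₃ possesses all N prescribed breakpoints and they are all active. -/
open Set Filter Topology

/-- One-sided derivatives. -/
def HasLR (f : ℝ → ℝ) (t l r : ℝ) : Prop :=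
  HasDerivWithinAt f l (Iic t) t ∧ HasDerivWithinAt f r (Ici t) t

lemma HasLR.diff_iff {f : ℝ → ℝ} {t l r : ℝ} (h : HasLR f t l r) :
    DifferentiableAt ℝ f t ↔ l = r := by
  constructor
  · intro hd
    have h1 := (uniqueDiffWithinAt_Iic t).eq_deriv _ h.1 hd.hasDerivAt.hasDerivWithinAt
    have h2 := (uniqueDiffWithinAt_Ici t).eq_deriv _ h.2 hd.hasDerivAt.hasDerivWithinAt
    rw [h1, h2]
  · rintro rfl
    have := h.1.union h.2
    rw [Iic_union_Ici, hasDerivWithinAt_univ] at this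
    exact this.differentiableAt

lemma relu_lin_pos (m z t : ℝ) (h : 0 < m * (t - z)) :
    HasLR (fun u => relu (m * (u - z))) t m m := by
  have h0 : HasDerivAt (fun u => m * (u - z)) m t := by
    simpa using ((hasDerivAt_id t).sub_const z).const_mul m
  have hc : ∀ᶠ u in 𝓝 t, 0 < m * (u - z) :=
    h0.continuousAt.eventually (lt_mem_nhds h)
  have : HasDerivAt (fun u => relu (m * (u - z))) m t := by
    refine h0.congr_of_eventuallyEq ?_
    filter_upwards [hc] with u hu
    simp [relu, hu.le]
  exact ⟨this.hasDerivWithinAt, this.hasDerivWithinAt⟩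

lemma relu_lin_neg (m z t : ℝ) (h : m * (t - z) < 0) :
    HasLR (fun u => relu (m * (u - z))) t 0 0 := by
  have h0 : HasDerivAt (fun u => m * (u - z)) m t := by
    simpa using ((hasDerivAt_id t).sub_const z).const_mul m
  have hc : ∀ᶠ u in 𝓝 t, m * (u - z) < 0 :=
    h0.continuousAt.eventually (gt_mem_nhds h)
  have : HasDerivAt (fun u => relu (m * (u - z))) 0 t := by
    refine (hasDerivAt_const t (0:ℝ)).congr_of_eventuallyEq ?_
    filter_upwards [hc] with u hu
    simp [relu, hu.le]
  exact ⟨this.hasDerivWithinAt, this.hasDerivWithinAt⟩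

lemma relu_lin_zero (m t : ℝ) (hm : m ≠ 0) :
    ∃ l r, l < r ∧ HasLR (fun u => relu (m * (u - t))) t l r := by
  have h0 : HasDerivAt (fun u => m * (u - t)) m t := by
    simpa using ((hasDerivAt_id t).sub_const t).const_mul m
  rcases lt_or_gt_of_ne hm with h | h
  · refine ⟨m, 0, h, ?_, ?_⟩
    · refine h0.hasDerivWithinAt.congr_of_mem ?_ (by simp)
      intro u hu
      have : 0 ≤ m * (u - t) := mul_nonneg_of_nonpos_of_nonpos h.le (by simpa using hu)
      simp [relu, this]
    · refine (hasDerivWithinAt_const t _ (0:ℝ)).congr_of_mem ?_ (by simp)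
      intro u hu
      have : m * (u - t) ≤ 0 := mul_nonpos_of_nonpos_of_nonneg h.le (by simpa using hu)
      simp [relu, this]
  · refine ⟨0, m, h, ?_, ?_⟩
    · refine (hasDerivWithinAt_const t _ (0:ℝ)).congr_of_mem ?_ (by simp)
      intro u hu
      have : m * (u - t) ≤ 0 := mul_nonpos_of_nonneg_of_nonpos h.le (by simpa using hu)
      simp [relu, this]
    · refine h0.hasDerivWithinAt.congr_of_mem ?_ (by simp)
      intro u hu
      have : 0 ≤ m * (u - t) := mul_nonneg h.le (by simpa using hu)
      simp [relu, this]

/-- Slopes. -/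
noncomputable def slp (x z : ℕ → ℝ) (s : ℝ) : ℕ → ℝ
  | 0 => s
  | k + 1 => - slp x z s k * ((x k - z k) / (z (k + 1) - x k))

/-- The zigzag. -/
noncomputable def zig (x z : ℕ → ℝ) (s : ℝ) (n : ℕ) (t : ℝ) : ℝ :=
  (∑ k ∈ Finset.range n, (slp x z s (k + 1) - slp x z s k) * relu (t - x k)) + s * (t - z 0)

lemma slp_sign {x z : ℕ → ℝ} (hzx : ∀ k, z k < x k)
    (hxz : ∀ k, x k < z (k + 1)) (s : ℝ) (hs : s ≠ 0) (k : ℕ) : 0 < s * (-1) ^ k * slp x z s k := by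
  induction k with
  | zero => simpa [slp] using mul_self_pos.2 hs
  | succ k ih =>
    have h : 0 < (x k - z k) / (z (k + 1) - x k) :=
      div_pos (sub_pos.2 (hzx k)) (sub_pos.2 (hxz k))
    have := mul_pos ih h
    rw [slp, pow_succ]
    linarith

lemma zig_piece {x z : ℕ → ℝ} (hzx : ∀ k, z k < x k)
    (hxz : ∀ k, x k < z (k + 1)) (s : ℝ) (n i : ℕ) (hi : i ≤ n) (u : ℝ) (h1 : ∀ k < i, x k ≤ u)
    (h2 : ∀ k, i ≤ k → k < n → u ≤ x k) :
    zig x z s n u = slp x z s i * (u - z i) := by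
  have hsum : ∑ k ∈ Finset.range n, (slp x z s (k + 1) - slp x z s k) * relu (u - x k)
      = ∑ k ∈ Finset.range i, (slp x z s (k + 1) - slp x z s k) * (u - x k) := by
    rw [← Finset.sum_range_add_sum_Ico _ hi]
    rw [Finset.sum_eq_zero (s := Finset.Ico i n), add_zero]
    · refine Finset.sum_congr rfl fun k hk => ?_
      have := h1 k (Finset.mem_range.1 hk)
      simp [relu, this]
    · intro k hk
      have := h2 k (Finset.mem_Ico.1 hk).1 (Finset.mem_Ico.1 hk).2
      simp [relu, this]
  rw [zig, hsum]
  clear hsum h1 h2 hi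
  induction i with
  | zero => simp [slp]
  | succ i ih =>
    have hne : z (i + 1) - x i ≠ 0 := (sub_pos.2 (hxz i)).ne'
    have key : slp x z s (i + 1) * (z (i + 1) - x i) = - slp x z s i * (x i - z i) := by
      rw [slp]; field_simp
    rw [Finset.sum_range_succ]
    linear_combination ih + key

lemma ev_near {x : ℕ → ℝ} (n : ℕ) (t : ℝ) :
    ∀ᶠ u in 𝓝 t, ∀ k ∈ Finset.range n, (x k < t → x k < u) ∧ (t < x k → u < x k) := by
  rw [Filter.eventually_all_finset]
  intro k _
  refine Filter.Eventually.and ?_ ?_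
  · by_cases h : x k < t
    · filter_upwards [lt_mem_nhds h] with u hu _ using hu
    · exact Eventually.of_forall fun u h' => absurd h' h
  · by_cases h : t < x k
    · filter_upwards [gt_mem_nhds h] with u hu _ using hu
    · exact Eventually.of_forall fun u h' => absurd h' h

lemma zig_left {x z : ℕ → ℝ} (hzx : ∀ k, z k < x k)
    (hxz : ∀ k, x k < z (k + 1)) (s : ℝ) (n i : ℕ) (hi : i ≤ n) (t l r : ℝ) (h1 : ∀ k < i, x k < t)
    (h2 : ∀ k, i ≤ k → k < n → t ≤ x k)
    (h : HasLR (fun u => relu (slp x z s i * (u - z i))) t l r) :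
    HasDerivWithinAt (fun u => relu (zig x z s n u)) l (Iic t) t := by
  refine h.1.congr_of_eventuallyEq_of_mem ?_ (by simp)
  filter_upwards [self_mem_nhdsWithin, nhdsWithin_le_nhds (ev_near (x := x) n t)] with u hu hk
  rw [zig_piece hzx hxz s n i hi u]
  · exact fun k hki => ((hk k (Finset.mem_range.2 (by omega))).1 (h1 k hki)).le
  · exact fun k hki hkn => le_trans hu (h2 k hki hkn)

lemma zig_right {x z : ℕ → ℝ} (hzx : ∀ k, z k < x k)
    (hxz : ∀ k, x k < z (k + 1)) (s : ℝ) (n i : ℕ) (hi : i ≤ n) (t l r : ℝ) (h1 : ∀ k < i, x k ≤ t)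
    (h2 : ∀ k, i ≤ k → k < n → t < x k)
    (h : HasLR (fun u => relu (slp x z s i * (u - z i))) t l r) :
    HasDerivWithinAt (fun u => relu (zig x z s n u)) r (Ici t) t := by
  refine h.2.congr_of_eventuallyEq_of_mem ?_ (by simp)
  filter_upwards [self_mem_nhdsWithin, nhdsWithin_le_nhds (ev_near (x := x) n t)] with u hu hk
  rw [zig_piece hzx hxz s n i hi u]
  · exact fun k hki => le_trans (h1 k hki) hu
  · exact fun k hki hkn => ((hk k (Finset.mem_range.2 (by omega))).2 (h2 k hki hkn)).le

lemma slp_ne {x z : ℕ → ℝ} (hzx : ∀ k, z k < x k)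
    (hxz : ∀ k, x k < z (k + 1)) (s : ℝ) (hs : s ≠ 0) (k : ℕ) : slp x z s k ≠ 0 := by
  intro h
  have := slp_sign hzx hxz s hs k
  simp [h] at this

lemma x_mono {x z : ℕ → ℝ} (hzx : ∀ k, z k < x k)
    (hxz : ∀ k, x k < z (k + 1)) : StrictMono x := strictMono_nat_of_lt_succ fun k => (hxz k).trans (hzx _)

/-- Away from breakpoints. -/
lemma zig_a {x z : ℕ → ℝ} (hzx : ∀ k, z k < x k)
    (hxz : ∀ k, x k < z (k + 1)) (s : ℝ) (hs : s ≠ 0) (n : ℕ) (t : ℝ) (hx : ∀ k < n, t ≠ x k)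
    (hz : ∀ k ≤ n, t ≠ z k) :
    ∃ l r, l = r ∧ HasLR (fun u => relu (zig x z s n u)) t l r := by
  have hex : ∃ i, i = n ∨ t < x i := ⟨n, Or.inl rfl⟩
  classical
  set i := Nat.find hex with hidef
  have hi : i ≤ n := Nat.find_min' hex (Or.inl rfl)
  have h1 : ∀ k < i, x k < t := by
    intro k hk
    have := Nat.find_min hex hk
    push Not at this
    exact lt_of_le_of_ne this.2 (hx k (by omega)).symm
  have h2 : ∀ k, i ≤ k → k < n → t < x k := by
    intro k hk hkn
    rcases Nat.find_spec hex with h | h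
    · omega
    · exact h.trans_le ((x_mono hzx hxz).monotone hk)
  have hv : slp x z s i * (t - z i) ≠ 0 :=
    mul_ne_zero (slp_ne hzx hxz s hs i) (sub_ne_zero.2 (hz i hi))
  have key : ∃ l, HasLR (fun u => relu (slp x z s i * (u - z i))) t l l := by
    rcases lt_or_gt_of_ne hv with h | h
    · exact ⟨_, relu_lin_neg _ _ _ h⟩
    · exact ⟨_, relu_lin_pos _ _ _ h⟩
  obtain ⟨l, hl⟩ := key
  exact ⟨l, l, rfl, zig_left hzx hxz s n i hi t l l h1 (fun k a b => (h2 k a b).le) hl,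
    zig_right hzx hxz s n i hi t l l (fun k a => (h1 k a).le) h2 hl⟩

/-- At zeros. -/
lemma zig_b {x z : ℕ → ℝ} (hzx : ∀ k, z k < x k)
    (hxz : ∀ k, x k < z (k + 1)) (s : ℝ) (hs : s ≠ 0) (n i : ℕ) (hi : i ≤ n) :
    ∃ l r, l < r ∧ HasLR (fun u => relu (zig x z s n u)) (z i) l r := by
  obtain ⟨l, r, hlr, h⟩ := relu_lin_zero (slp x z s i) (z i) (slp_ne hzx hxz s hs i)
  have hm := (x_mono hzx hxz).monotone
  have h1 : ∀ k < i, x k < z i := by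
    intro k hk
    obtain ⟨j, rfl⟩ : ∃ j, i = j + 1 := ⟨i - 1, by omega⟩
    exact (hm (by omega : k ≤ j)).trans_lt (hxz j)
  have h2 : ∀ k, i ≤ k → k < n → z i < x k := fun k hk _ => (hzx i).trans_le (hm hk)
  exact ⟨l, r, hlr, zig_left hzx hxz s n i hi _ l r h1 (fun k a b => (h2 k a b).le) h,
    zig_right hzx hxz s n i hi _ l r (fun k a => (h1 k a).le) h2 h⟩

/-- At inner breakpoints. -/
lemma zig_c {x z : ℕ → ℝ} (hzx : ∀ k, z k < x k)
    (hxz : ∀ k, x k < z (k + 1)) (s : ℝ) (hs : s ≠ 0) (n i : ℕ) (hi : i < n) :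
    ∃ l r, r ≤ l ∧ (0 < s * (-1) ^ i → r < l) ∧
      HasLR (fun u => relu (zig x z s n u)) (x i) l r := by
  have hm := x_mono hzx hxz
  have hL := fun l r => zig_left hzx hxz s n i hi.le (x i) l r (fun k hk => hm hk)
    (fun k hk _ => hm.monotone hk)
  have hR := fun l r => zig_right hzx hxz s n (i + 1) hi (x i) l r
    (fun k hk => hm.monotone (by omega)) (fun k hk _ => hm (by omega))
  have s1 := slp_sign hzx hxz s hs i
  have hq : 0 < (x i - z i) / (z (i + 1) - x i) :=
    div_pos (sub_pos.2 (hzx i)) (sub_pos.2 (hxz i))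
  have e2 : slp x z s (i + 1) = - slp x z s i * ((x i - z i) / (z (i + 1) - x i)) := rfl
  have p1 := sub_pos.2 (hzx i)
  have p2 := sub_neg.2 (hxz i)
  rcases lt_or_gt_of_ne (slp_ne hzx hxz s hs i) with h | h
  · have h' : 0 < slp x z s (i + 1) := by rw [e2]; exact mul_pos (by linarith) hq
    refine ⟨0, 0, le_rfl, fun h0 => ?_, hL 0 0 (relu_lin_neg _ _ _ (mul_neg_of_neg_of_pos h p1)),
      hR 0 0 (relu_lin_neg _ _ _ (mul_neg_of_pos_of_neg h' p2))⟩
    exact absurd s1 (not_lt.2 (mul_neg_of_pos_of_neg h0 h).le)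
  · have h' : slp x z s (i + 1) < 0 := by rw [e2]; exact mul_neg_of_neg_of_pos (by linarith) hq
    exact ⟨_, _, (h'.trans h).le, fun _ => h'.trans h,
      hL _ _ (relu_lin_pos _ _ _ (mul_pos h p1)),
      hR _ _ (relu_lin_pos _ _ _ (mul_pos_of_neg_of_neg h' p2))⟩

lemma HasLR.fsum {n : ℕ} {F : Fin n → ℝ → ℝ} {t : ℝ} {l r : Fin n → ℝ}
    (h : ∀ j, HasLR (F j) t (l j) (r j)) :
    HasLR (fun u => ∑ j, F j u) t (∑ j, l j) (∑ j, r j) :=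
  ⟨HasDerivWithinAt.fun_sum fun j _ => (h j).1, HasDerivWithinAt.fun_sum fun j _ => (h j).2⟩

lemma extend_mono (N : ℕ) (y : Fin N → ℝ) (hy : StrictMono y) :
    ∃ Y : ℕ → ℝ, StrictMono Y ∧ ∀ p : Fin N, Y p = y p := by
  obtain ⟨B, hB⟩ := (Set.finite_range y).bddAbove
  refine ⟨fun p => if h : p < N then y ⟨p, h⟩ else B + 1 + p, ?_, ?_⟩
  · intro p q hpq
    by_cases hq : q < N
    · have hp : p < N := hpq.trans hq
      simp only [hp, hq, dif_pos]
      exact hy hpq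
    · by_cases hp : p < N
      · simp only [hp, hq, dif_pos, dif_neg, not_false_eq_true]
        have := hB (Set.mem_range_self (⟨p, hp⟩ : Fin N))
        have : (0:ℝ) ≤ q := Nat.cast_nonneg q
        linarith
      · simp only [hp, hq, dif_neg, not_false_eq_true]
        have : (p:ℝ) < q := by exact_mod_cast hpq
        linarith
  · intro p
    simp

/-- for `n₁ ≥ 1`, `n₂ ≥ 2` and any `(n₁+1)(n₂+1) − 1` prescribed pairwise
distinct real numbers, there is a function `f₃ ∈ Y_{n₁,n₂}` whose set of
non-differentiability points is exactly the prescribed set (all prescribed breakpoints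
are present and active). -/
theorem two_layer_max_prescribed_breakpoints (n1 n2 : ℕ) (hn1 : 1 ≤ n1) (hn2 : 2 ≤ n2)
    (y : Fin ((n1 + 1) * (n2 + 1) - 1) → ℝ) (hy : StrictMono y) :
    ∃ f : ℝ → ℝ, IsReLU2 n1 n2 f ∧
      {t : ℝ | ¬ DifferentiableAt ℝ f t} = Set.range y := by
  obtain ⟨Y, hY, hYy⟩ := extend_mono _ y hy
  set x : ℕ → ℝ := fun k => Y ((n2 + 1) * k + n2) with hxdef
  set z : ℕ → ℕ → ℝ := fun j k => Y ((n2 + 1) * k + j) with hzdef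
  have hzx : ∀ j < n2, ∀ k, z j k < x k := fun j hj k => hY (by omega)
  have hxz : ∀ j k, x k < z j (k + 1) := fun j k => hY (by rw [mul_add]; omega)
  set s : Fin n2 → ℝ := fun j => if (j : ℕ) = 0 then 1 else -1 with hsdef
  have hs : ∀ j, s j ≠ 0 := by
    intro j
    simp only [hsdef]
    split_ifs <;> norm_num
  have huniq : ∀ k k' j j', j < n2 + 1 → j' < n2 + 1 →
      Y ((n2 + 1) * k + j) = Y ((n2 + 1) * k' + j') → j = j' ∧ k = k' := by
    intro k k' j j' hj hj' h
    have h := hY.injective h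
    have e1 := congrArg (· % (n2 + 1)) h
    have e2 := congrArg (· / (n2 + 1)) h
    simp only [Nat.mul_add_mod, Nat.mod_eq_of_lt hj, Nat.mod_eq_of_lt hj'] at e1
    simp only [Nat.mul_add_div (Nat.succ_pos n2), Nat.div_eq_of_lt hj,
      Nat.div_eq_of_lt hj'] at e2
    exact ⟨e1, by simpa using e2⟩
  refine ⟨fun t => ∑ j : Fin n2, relu (zig x (z j) (s j) n1 t), ?_, ?_⟩
  · refine ⟨fun _ => 1, fun k => - x k,
      fun j k => slp x (z j) (s j) (k + 1) - slp x (z j) (s j) k, s,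
      fun j => - (s j * z j 0), fun _ => 1, 0, 0, fun t => ?_⟩
    simp only [zero_mul, zero_add, one_mul]
    refine Finset.sum_congr rfl fun j _ => ?_
    congr 1
    rw [zig, Finset.sum_range]
    simp only [sub_eq_add_neg]
    ring
  · ext t
    simp only [Set.mem_ofPred_eq]
    by_cases hX : ∃ k < n1, t = x k
    · obtain ⟨k, hk, rfl⟩ := hX
      have hmem : x k ∈ Set.range y := by
        refine ⟨⟨(n2 + 1) * k + n2, ?_⟩, (hYy _).symm⟩
        have : (n2 + 1) * (k + 1) ≤ (n2 + 1) * n1 := Nat.mul_le_mul_left _ hk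
        rw [mul_comm (n1 + 1)]
        rw [mul_add] at *
        omega
      refine iff_of_true ?_ hmem
      choose l r hle hlt hLR using fun j : Fin n2 =>
        zig_c (hzx j j.2) (hxz j) (s j) (hs j) n1 k hk
      rw [(HasLR.fsum hLR).diff_iff]
      refine ne_of_gt (Finset.sum_lt_sum (fun j _ => hle j) ?_)
      rcases Nat.even_or_odd k with he | ho
      · exact ⟨⟨0, by omega⟩, Finset.mem_univ _, hlt _ (by simp [hsdef, he.neg_one_pow])⟩
      · exact ⟨⟨1, by omega⟩, Finset.mem_univ _, hlt _ (by simp [hsdef, ho.neg_one_pow])⟩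
    · push Not at hX
      by_cases hZ : ∃ j : Fin n2, ∃ k ≤ n1, t = z j k
      · obtain ⟨j0, k, hk, rfl⟩ := hZ
        have hmem : z j0 k ∈ Set.range y := by
          refine ⟨⟨(n2 + 1) * k + j0, ?_⟩, (hYy _).symm⟩
          have : (n2 + 1) * k ≤ (n2 + 1) * n1 := Nat.mul_le_mul_left _ hk
          have := j0.2
          rw [mul_comm (n1 + 1), mul_add]
          omega
        refine iff_of_true ?_ hmem
        have hj : ∀ j : Fin n2, ∃ l r, l ≤ r ∧ (j = j0 → l < r) ∧
            HasLR (fun u => relu (zig x (z j) (s j) n1 u)) (z j0 k) l r := by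
          intro j
          by_cases h : j = j0
          · subst h
            obtain ⟨l, r, h1, h2⟩ := zig_b (hzx j j.2) (hxz j) (s j) (hs j) n1 k hk
            exact ⟨l, r, h1.le, fun _ => h1, h2⟩
          · obtain ⟨l, r, h1, h2⟩ := zig_a (hzx j j.2) (hxz j) (s j) (hs j) n1 (z j0 k) hX (by
              intro k' _ he
              have := (huniq k k' j0 j (by omega) (by omega) he).1
              exact h (Fin.ext this.symm))
            exact ⟨l, r, h1.le, fun h' => absurd h' h, h2⟩
        choose l r hle hlt hLR using hj
        rw [(HasLR.fsum hLR).diff_iff]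
        exact ne_of_lt (Finset.sum_lt_sum (fun j _ => hle j) ⟨j0, Finset.mem_univ _, hlt j0 rfl⟩)
      · push Not at hZ
        refine iff_of_false ?_ ?_
        · choose l r he hLR using fun j : Fin n2 =>
            zig_a (hzx j j.2) (hxz j) (s j) (hs j) n1 t hX (hZ j)
          rw [not_not, (HasLR.fsum hLR).diff_iff]
          exact Finset.sum_congr rfl fun j _ => he j
        · rintro ⟨p, rfl⟩
          have hp := p.2
          have hdm := Nat.div_add_mod (p : ℕ) (n2 + 1)
          have hmod := Nat.mod_lt (p : ℕ) (Nat.succ_pos n2)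
          set q := (p : ℕ) / (n2 + 1) with hq
          set r := (p : ℕ) % (n2 + 1) with hr
          have hq1 : q < n1 + 1 := by
            rw [hq, Nat.div_lt_iff_lt_mul (Nat.succ_pos n2)]
            exact lt_of_lt_of_le hp (Nat.sub_le _ _)
          by_cases hrn : r = n2
          · have hqn : q < n1 := by
              by_contra hcon
              have : q = n1 := by omega
              rw [this] at hdm
              have e : (n1 + 1) * (n2 + 1) = (n2 + 1) * n1 + (n2 + 1) := by ring
              omega
            refine hX q hqn ?_
            rw [← hYy p, ← hdm, hrn]
          · refine hZ ⟨r, by omega⟩ q (by omega) ?_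
            rw [← hYy p, ← hdm]
end

section
/- Let f₃ ∈ Y_{n₁,n₂} with c_j^(2) = 0 for all j = 1, …, n₂ (no source channel in the second layer). If n₁ < 3 or n₂ < 2, then f₃ cannot possess (n₁+1)(n₂+1)−1 active breakpoints; that is, the set of points at which f₃ is not differentiable has fewer than (n₁+1)(n₂+1)−1 elements. -/
open Filter Topology in
theorem relu_aff (a b t u : ℝ)
    (h : a ≠ 0 → ((-b/a < t ∧ -b/a ≤ u) ∨ (t < -b/a ∧ u ≤ -b/a))) :
    relu (a*u+b) = relu (a*t+b) + (if 0 < a*t+b then a else 0)*(u-t) := by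
  unfold relu
  by_cases ha : a = 0
  · subst ha; simp
  replace h := h ha
  obtain ⟨r, hr⟩ : ∃ r, r = -b/a := ⟨_, rfl⟩
  have hb : b = -(a*r) := by rw [hr]; field_simp
  rw [← hr] at h
  subst hb
  have e1 : a*t + -(a*r) = a*(t-r) := by ring
  have e2 : a*u + -(a*r) = a*(u-r) := by ring
  rw [e1, e2]
  rcases lt_or_gt_of_ne ha with h0 | h0 <;> rcases h with ⟨h1, h2⟩ | ⟨h1, h2⟩
  · have k1 : a*(t-r) < 0 := mul_neg_of_neg_of_pos h0 (by linarith)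
    have k2 : a*(u-r) ≤ 0 := mul_nonpos_of_nonpos_of_nonneg h0.le (by linarith)
    rw [max_eq_right k1.le, max_eq_right k2, if_neg (by linarith)]; ring
  · have k1 : 0 < a*(t-r) := mul_pos_of_neg_of_neg h0 (by linarith)
    have k2 : 0 ≤ a*(u-r) := mul_nonneg_of_nonpos_of_nonpos h0.le (by linarith)
    rw [max_eq_left k1.le, max_eq_left k2, if_pos k1]; ring
  · have k1 : 0 < a*(t-r) := mul_pos h0 (by linarith)
    have k2 : 0 ≤ a*(u-r) := mul_nonneg h0.le (by linarith)
    rw [max_eq_left k1.le, max_eq_left k2, if_pos k1]; ring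
  · have k1 : a*(t-r) < 0 := mul_neg_of_pos_of_neg h0 (by linarith)
    have k2 : a*(u-r) ≤ 0 := mul_nonpos_of_nonneg_of_nonpos h0.le (by linarith)
    rw [max_eq_right k1.le, max_eq_right k2, if_neg (by linarith)]; ring

noncomputable def sl {n : ℕ} (c a b : Fin n → ℝ) (t : ℝ) : ℝ :=
  ∑ k, c k * (if 0 < a k * t + b k then a k else 0)

noncomputable def gg {n : ℕ} (c a b : Fin n → ℝ) (d t : ℝ) : ℝ :=
  (∑ k, c k * relu (a k * t + b k)) + d

noncomputable def TT {n : ℕ} (a b : Fin n → ℝ) : Finset ℝ :=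
  (Finset.univ.filter (fun k => a k ≠ 0)).image (fun k => -b k / a k)

theorem mem_TT {n : ℕ} (a b : Fin n → ℝ) (k : Fin n) (h : a k ≠ 0) : -b k / a k ∈ TT a b := by
  unfold TT
  exact Finset.mem_image.2 ⟨k, by simpa using h, rfl⟩

theorem gg_aff {n : ℕ} (c a b : Fin n → ℝ) (d t u : ℝ)
    (h : ∀ r ∈ TT a b, ((r < t ∧ r ≤ u) ∨ (t < r ∧ u ≤ r))) :
    gg c a b d u = gg c a b d t + sl c a b t * (u - t) := by
  unfold gg sl
  rw [Finset.sum_mul, add_right_comm, ← Finset.sum_add_distrib]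
  congr 1
  refine Finset.sum_congr rfl fun k _ => ?_
  rw [relu_aff (a k) (b k) t u (fun hk => h _ (mem_TT a b k hk))]
  ring

theorem gg_cont {n : ℕ} (c a b : Fin n → ℝ) (d : ℝ) : Continuous (gg c a b d) := by
  unfold gg relu
  fun_prop

open Filter Topology in
theorem gg_local {n : ℕ} (c a b : Fin n → ℝ) (d t : ℝ) (ht : t ∉ TT a b) :
    ∀ᶠ u in 𝓝 t, gg c a b d u = gg c a b d t + sl c a b t * (u - t) := by
  have : ∀ᶠ u in 𝓝 t, ∀ r ∈ TT a b, ((r < t ∧ r ≤ u) ∨ (t < r ∧ u ≤ r)) := by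
    rw [Filter.eventually_all_finset]
    intro r hr
    have hne : r ≠ t := fun e => ht (e ▸ hr)
    rcases lt_or_gt_of_ne hne with h | h
    · filter_upwards [lt_mem_nhds h] with u hu
      exact Or.inl ⟨h, hu.le⟩
    · filter_upwards [gt_mem_nhds h] with u hu
      exact Or.inr ⟨h, hu.le⟩
  filter_upwards [this] with u hu
  exact gg_aff c a b d t u hu

open Filter Topology in
theorem relu_diff_neg {n : ℕ} (c a b : Fin n → ℝ) (d t : ℝ) (ht : gg c a b d t < 0) :
    DifferentiableAt ℝ (fun t => relu (gg c a b d t)) t := by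
  have h1 : ∀ᶠ u in 𝓝 t, gg c a b d u < 0 :=
    (gg_cont c a b d).continuousAt.eventually_lt continuousAt_const ht
  have : (fun t => relu (gg c a b d t)) =ᶠ[𝓝 t] fun _ => (0:ℝ) := by
    filter_upwards [h1] with u hu
    exact max_eq_right hu.le
  exact (differentiableAt_const _).congr_of_eventuallyEq this

open Filter Topology in
theorem relu_diff {n : ℕ} (c a b : Fin n → ℝ) (d t : ℝ) (ht : t ∉ TT a b)
    (h : ¬ (gg c a b d t = 0 ∧ sl c a b t ≠ 0)) :
    DifferentiableAt ℝ (fun t => relu (gg c a b d t)) t := by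
  have h2 := gg_local c a b d t ht
  rcases lt_trichotomy (gg c a b d t) 0 with h0 | h0 | h0
  · exact relu_diff_neg c a b d t h0
  · have hs : sl c a b t = 0 := by by_contra hs; exact h ⟨h0, hs⟩
    have : (fun t => relu (gg c a b d t)) =ᶠ[𝓝 t] fun _ => (0:ℝ) := by
      filter_upwards [h2] with u hu
      rw [hu, h0, hs]; simp [relu]
    exact (differentiableAt_const _).congr_of_eventuallyEq this
  · have h1 : ∀ᶠ u in 𝓝 t, 0 < gg c a b d u :=
      continuousAt_const.eventually_lt (gg_cont c a b d).continuousAt h0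
    have : (fun t => relu (gg c a b d t)) =ᶠ[𝓝 t]
        fun u => gg c a b d t + sl c a b t * (u - t) := by
      filter_upwards [h1, h2] with u hu hu2
      rw [← hu2]
      exact max_eq_left hu.le
    refine DifferentiableAt.congr_of_eventuallyEq ?_ this
    fun_prop

def ZZ {n : ℕ} (c a b : Fin n → ℝ) (d : ℝ) : Set ℝ :=
  {t | t ∉ TT a b ∧ gg c a b d t = 0 ∧ sl c a b t ≠ 0}

noncomputable def cnt (T : Finset ℝ) (t : ℝ) : ℕ := (T.filter (· < t)).card

theorem cnt_mono (T : Finset ℝ) {t u : ℝ} (h : t ≤ u) : cnt T t ≤ cnt T u :=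
  Finset.card_le_card (fun x hx => by
    simp only [Finset.mem_filter] at hx ⊢
    exact ⟨hx.1, lt_of_lt_of_le hx.2 h⟩)

theorem ZZ_inj_aux {n : ℕ} (c a b : Fin n → ℝ) (d : ℝ) {t u : ℝ} (ht : t ∈ ZZ c a b d)
    (hu : u ∈ ZZ c a b d) (e : cnt (TT a b) t = cnt (TT a b) u) (h : t < u) : False := by
  obtain ⟨t1, t2, t3⟩ := ht
  obtain ⟨u1, u2, u3⟩ := hu
  have hsub : (TT a b).filter (· < t) ⊆ (TT a b).filter (· < u) := fun x hx => by
    simp only [Finset.mem_filter] at hx ⊢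
    exact ⟨hx.1, hx.2.trans h⟩
  have heq := Finset.eq_of_subset_of_card_le hsub (le_of_eq e.symm)
  have := gg_aff c a b d t u (fun r hr => by
    by_cases hru : r < u
    · have : r ∈ (TT a b).filter (· < t) := by
        rw [heq]; exact Finset.mem_filter.2 ⟨hr, hru⟩
      exact Or.inl ⟨(Finset.mem_filter.1 this).2, hru.le⟩
    · push Not at hru
      exact Or.inr ⟨h.trans_le hru, hru⟩)
  rw [t2, u2, zero_add] at this
  rcases mul_eq_zero.1 this.symm with h' | h'
  · exact t3 h'
  · linarith

theorem ZZ_inj {n : ℕ} (c a b : Fin n → ℝ) (d : ℝ) : Set.InjOn (cnt (TT a b)) (ZZ c a b d) := by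
  intro t ht u hu e
  rcases lt_trichotomy t u with h | h | h
  · exact (ZZ_inj_aux c a b d ht hu e h).elim
  · exact h
  · exact (ZZ_inj_aux c a b d hu ht e.symm h).elim

theorem cnt_lt (T : Finset ℝ) (t : ℝ) : cnt T t ∈ Finset.range (T.card + 1) := by
  rw [Finset.mem_range]
  exact Nat.lt_succ_of_le (Finset.card_filter_le _ _)

theorem ZZ_fin {n : ℕ} (c a b : Fin n → ℝ) (d : ℝ) : (ZZ c a b d).Finite :=
  Set.Finite.of_injOn (t := ↑(Finset.range ((TT a b).card + 1)))
    (fun t _ => cnt_lt (TT a b) t) (ZZ_inj c a b d) (Finset.finite_toSet _)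

theorem ZZ_card {n : ℕ} (c a b : Fin n → ℝ) (d : ℝ) :
    (ZZ_fin c a b d).toFinset.card ≤ (TT a b).card + 1 := by
  have := Finset.card_le_card_of_injOn (s := (ZZ_fin c a b d).toFinset)
    (t := Finset.range ((TT a b).card + 1)) (cnt (TT a b))
    (fun t _ => cnt_lt (TT a b) t) (by simpa using ZZ_inj c a b d)
  simpa using this

theorem ZZ_surj {n : ℕ} (c a b : Fin n → ℝ) (d : ℝ)
    (h : (TT a b).card + 1 ≤ (ZZ_fin c a b d).toFinset.card) (i : ℕ) (hi : i ≤ (TT a b).card) :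
    ∃ z ∈ ZZ c a b d, cnt (TT a b) z = i := by
  obtain ⟨z, hz, e⟩ := Finset.surj_on_of_inj_on_of_card_le (s := (ZZ_fin c a b d).toFinset)
    (t := Finset.range ((TT a b).card + 1)) (fun t _ => cnt (TT a b) t)
    (fun t _ => cnt_lt (TT a b) t)
    (fun t u ht hu e => ZZ_inj c a b d (by simpa using ht) (by simpa using hu) e)
    (by simpa using h) i (Finset.mem_range.2 (by omega))
  exact ⟨z, by simpa using hz, e.symm⟩

theorem TT_card {n : ℕ} (a b : Fin n → ℝ) : (TT a b).card ≤ n := by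
  unfold TT
  refine Finset.card_image_le.trans ((Finset.card_filter_le _ _).trans ?_)
  simp

/-- Passing one breakpoint between two zeros flips the slope sign. -/
theorem flip_sign (g s s' z r z' : ℝ) (h1 : g = s * (r - z)) (h2 : g = s' * (r - z'))
    (hz : z < r) (hz' : r < z') (hs : s ≠ 0) (hs' : s' ≠ 0) : s * s' < 0 := by
  rcases lt_or_gt_of_ne hs with h | h <;> rcases lt_or_gt_of_ne hs' with h' | h' <;> nlinarith

/-- zeros and breakpoints in order -/
theorem struct2 {n : ℕ} (c a b : Fin n → ℝ) (d : ℝ)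
    (h : (TT a b).card + 1 ≤ (ZZ_fin c a b d).toFinset.card) (h2 : 2 ≤ (TT a b).card) :
    ∃ z0 r z1 r' z2, z0 < r ∧ r < z1 ∧ z1 < r' ∧ r' < z2 ∧ r ∈ TT a b ∧ r' ∈ TT a b ∧
      (∀ x ∈ TT a b, x = r ∨ x = r' ∨ z2 < x) ∧
      sl c a b z0 * sl c a b z1 < 0 ∧ sl c a b z1 * sl c a b z2 < 0 ∧
      gg c a b d r = sl c a b z0 * (r - z0) ∧ gg c a b d r' = sl c a b z1 * (r' - z1) := by
  obtain ⟨z0, ⟨n0, g0, s0⟩, c0⟩ := ZZ_surj c a b d h 0 (by omega)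
  obtain ⟨z1, ⟨n1, g1, s1⟩, c1⟩ := ZZ_surj c a b d h 1 (by omega)
  obtain ⟨z2, ⟨n2, g2, s2⟩, c2⟩ := ZZ_surj c a b d h 2 (by omega)
  have h01 : z0 < z1 := by
    by_contra hh; push Not at hh; have := cnt_mono (TT a b) hh; omega
  have h12 : z1 < z2 := by
    by_contra hh; push Not at hh; have := cnt_mono (TT a b) hh; omega
  have f0 : ∀ x ∈ TT a b, z0 < x := by
    intro x hx
    unfold cnt at c0
    rw [Finset.card_eq_zero, Finset.filter_eq_empty_iff] at c0
    exact lt_of_le_of_ne (not_lt.1 (c0 hx)) (fun e => n0 (e ▸ hx))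
  obtain ⟨r, hr⟩ := Finset.card_eq_one.1 c1
  have hr1 : ∀ x, (x ∈ TT a b ∧ x < z1) ↔ x = r := fun x => by
    rw [← Finset.mem_singleton, ← hr, Finset.mem_filter]
  obtain ⟨hrT, hrz⟩ := (hr1 r).2 rfl
  have hmem : r ∈ (TT a b).filter (· < z2) := Finset.mem_filter.2 ⟨hrT, hrz.trans h12⟩
  have ce : (((TT a b).filter (· < z2)).erase r).card = 1 := by
    rw [Finset.card_erase_of_mem hmem]
    unfold cnt at c2; omega
  obtain ⟨r', hr'⟩ := Finset.card_eq_one.1 ce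
  have hr2 : ∀ x, (x ≠ r ∧ x ∈ TT a b ∧ x < z2) ↔ x = r' := fun x => by
    rw [← Finset.mem_singleton, ← hr', Finset.mem_erase, Finset.mem_filter]
  obtain ⟨hne, hrT', hrz'⟩ := (hr2 r').2 rfl
  have hz1r' : z1 < r' := by
    refine lt_of_le_of_ne (not_lt.1 fun hlt => hne ((hr1 r').1 ⟨hrT', hlt⟩)) ?_
    rintro rfl; exact n1 hrT'
  have hall : ∀ x ∈ TT a b, x = r ∨ x = r' ∨ z2 < x := by
    intro x hx
    by_cases e : x = r
    · exact Or.inl e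
    by_cases e' : x = r'
    · exact Or.inr (Or.inl e')
    refine Or.inr (Or.inr (lt_of_le_of_ne (not_lt.1 fun hlt => e' ((hr2 x).1 ⟨e, hx, hlt⟩)) ?_))
    rintro rfl; exact n2 hx
  have hz0r := f0 r hrT
  have A := gg_aff c a b d z0 r (fun x hx => by
    rcases hall x hx with e | e | e
    · exact Or.inr ⟨by linarith, by linarith⟩
    · exact Or.inr ⟨by linarith, by linarith⟩
    · exact Or.inr ⟨by linarith, by linarith⟩)
  have B := gg_aff c a b d z1 r (fun x hx => by
    rcases hall x hx with e | e | e
    · exact Or.inl ⟨by linarith, by linarith⟩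
    · exact Or.inr ⟨by linarith, by linarith⟩
    · exact Or.inr ⟨by linarith, by linarith⟩)
  have C := gg_aff c a b d z1 r' (fun x hx => by
    rcases hall x hx with e | e | e
    · exact Or.inl ⟨by linarith, by linarith⟩
    · exact Or.inr ⟨by linarith, by linarith⟩
    · exact Or.inr ⟨by linarith, by linarith⟩)
  have D := gg_aff c a b d z2 r' (fun x hx => by
    rcases hall x hx with e | e | e
    · exact Or.inl ⟨by linarith, by linarith⟩
    · exact Or.inl ⟨by linarith, by linarith⟩
    · exact Or.inr ⟨by linarith, by linarith⟩)
  rw [g0, zero_add] at A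
  rw [g1, zero_add] at B C
  rw [g2, zero_add] at D
  exact ⟨z0, r, z1, r', z2, hz0r, hrz, hz1r', hrz', hrT, hrT', hall,
    flip_sign _ _ _ _ _ _ A B hz0r hrz s0 s1, flip_sign _ _ _ _ _ _ C D hz1r' hrz' s1 s2, A, C⟩

theorem case_one (c a b : Fin 1 → ℝ) (d : ℝ) (hT : (TT a b).card = 1)
    (h : (TT a b).card + 1 ≤ (ZZ_fin c a b d).toFinset.card) : False := by
  obtain ⟨z0, ⟨n0, g0, s0⟩, c0⟩ := ZZ_surj c a b d h 0 (by omega)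
  obtain ⟨z1, ⟨n1, g1, s1⟩, c1⟩ := ZZ_surj c a b d h 1 (by omega)
  have ha : a 0 ≠ 0 := by
    intro ha; simp [sl, ha] at s0
  have h01 : z0 < z1 := by
    by_contra hh; push Not at hh; have := cnt_mono (TT a b) hh; omega
  have hm := mem_TT a b 0 ha
  have e0 : z0 ≤ -b 0 / a 0 := by
    unfold cnt at c0
    rw [Finset.card_eq_zero, Finset.filter_eq_empty_iff] at c0
    exact not_lt.1 (c0 hm)
  have e1 : -b 0 / a 0 < z1 := by
    obtain ⟨x, hx⟩ := Finset.card_eq_one.1 c1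
    obtain ⟨y, hy⟩ := Finset.card_eq_one.1 hT
    have : x ∈ (TT a b).filter (· < z1) := by rw [hx]; simp
    rw [Finset.mem_filter] at this
    rw [hy, Finset.mem_singleton] at hm this
    rw [hm, ← this.1]; exact this.2
  obtain ⟨r, hr⟩ : ∃ r, r = -b 0 / a 0 := ⟨_, rfl⟩
  rw [← hr] at e0 e1
  have hb : b 0 = -(a 0 * r) := by rw [hr]; field_simp
  simp only [sl, Fin.sum_univ_one] at s0 s1
  rcases lt_or_gt_of_ne ha with h0 | h0
  · exact s1 (by rw [if_neg (by rw [hb]; nlinarith), mul_zero])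
  · exact s0 (by rw [if_neg (by rw [hb]; nlinarith), mul_zero])

/-- the algebra for two first-layer neurons, breakpoints `r < r'` -/
theorem two_alg (c a c' a' b b' z0 r z1 r' z2 : ℝ) (h0 : z0 < r) (h1 : r < z1) (h2 : z1 < r')
    (h3 : r' < z2) (ha : a ≠ 0) (ha' : a' ≠ 0) (hb : b = -(a * r)) (hb' : b' = -(a' * r'))
    (p : (c * (if 0 < a * z0 + b then a else 0) + c' * (if 0 < a' * z0 + b' then a' else 0)) *
      (c * (if 0 < a * z1 + b then a else 0) + c' * (if 0 < a' * z1 + b' then a' else 0)) < 0)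
    (q : (c * (if 0 < a * z1 + b then a else 0) + c' * (if 0 < a' * z1 + b' then a' else 0)) *
      (c * (if 0 < a * z2 + b then a else 0) + c' * (if 0 < a' * z2 + b' then a' else 0)) < 0) :
    False := by
  subst hb hb'
  have e : ∀ x y z : ℝ, x * y + -(x * z) = x * (y - z) := fun x y z => by ring
  simp only [e] at p q
  rcases lt_or_gt_of_ne ha with k | k <;> rcases lt_or_gt_of_ne ha' with k' | k'
  all_goals
    try simp only [mul_pos_iff, k, k', k.not_gt, k'.not_gt, true_and, false_and, or_false, false_or,
      sub_pos, sub_neg, h0, h1, h2, h3, h0.not_gt, h1.not_gt, h2.not_gt, h3.not_gt, h0.trans h1,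
      (h0.trans h1).not_gt, h1.trans h2, (h1.trans h2).not_gt, h2.trans h3, (h2.trans h3).not_gt,
      h0.trans (h1.trans h2), (h0.trans (h1.trans h2)).not_gt,
      h1.trans (h2.trans h3), (h1.trans (h2.trans h3)).not_gt, if_true, if_false,
      mul_zero, zero_mul, add_zero, zero_add, lt_irrefl] at p q
  all_goals nlinarith [sq_nonneg (c * a), sq_nonneg (c' * a'), sq_nonneg (c * a + c' * a')]

theorem case_two (c a b : Fin 2 → ℝ) (d : ℝ) (hT : (TT a b).card = 2)
    (h : (TT a b).card + 1 ≤ (ZZ_fin c a b d).toFinset.card) : False := by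
  obtain ⟨z0, r, z1, r', z2, h0, h1, h2, h3, hr, hr', hall, p, q, -, -⟩ :=
    struct2 c a b d h (by omega)
  unfold TT at hr hr'
  obtain ⟨k, hk, rfl⟩ := Finset.mem_image.1 hr
  obtain ⟨k', hk', rfl⟩ := Finset.mem_image.1 hr'
  have hk := (Finset.mem_filter.1 hk).2
  have hk' := (Finset.mem_filter.1 hk').2
  have hne : k ≠ k' := by rintro rfl; linarith
  have hs : ∀ t, sl c a b t = c k * (if 0 < a k * t + b k then a k else 0) +
      c k' * (if 0 < a k' * t + b k' then a k' else 0) := by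
    intro t
    unfold sl
    rw [Fin.sum_univ_two]
    fin_cases k <;> fin_cases k' <;> simp at hne ⊢
    ring
  rw [hs, hs] at p q
  exact two_alg _ _ _ _ _ _ _ _ _ _ _ h0 h1 h2 h3 hk hk' (by field_simp) (by field_simp) p q


/-- a two-hidden-layer ReLU network without source channel in the second
layer (`c^(2) = 0`) cannot possess `(n₁+1)(n₂+1) − 1` active breakpoints when `n₁ < 3`
or `n₂ < 2`: its set of non-differentiability points has fewer than `(n₁+1)(n₂+1) − 1`
elements. -/
theorem no_source_channel_few_breakpoints (n1 n2 : ℕ) (hn1 : 1 ≤ n1) (hn2 : 1 ≤ n2)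
    (a1 b1 : Fin n1 → ℝ) (a2 : Fin n2 → Fin n1 → ℝ) (b2 a3 : Fin n2 → ℝ) (c3 b3 : ℝ)
    (f : ℝ → ℝ)
    (hf : ∀ t, f t = c3 * t + b3 +
      ∑ j, a3 j * relu ((∑ k, a2 j k * relu (a1 k * t + b1 k)) + b2 j))
    (h : n1 < 3 ∨ n2 < 2) :
    {t : ℝ | ¬ DifferentiableAt ℝ f t}.encard
      < (((n1 + 1) * (n2 + 1) - 1 : ℕ) : ℕ∞) := by
  classical
  by_contra hcon
  push Not at hcon
  set S : Set ℝ := {t : ℝ | ¬ DifferentiableAt ℝ f t} with hS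
  have hf' : f = fun t => c3 * t + b3 + ∑ j, a3 j * relu (gg (a2 j) a1 b1 (b2 j) t) := by
    funext t; rw [hf t]; rfl
  have hdiff : ∀ t, (∀ j, DifferentiableAt ℝ (fun t => relu (gg (a2 j) a1 b1 (b2 j) t)) t) →
      t ∉ S := by
    intro t ht hmem
    apply hmem
    rw [hf']
    have : DifferentiableAt ℝ (fun t => ∑ j, a3 j * relu (gg (a2 j) a1 b1 (b2 j) t)) t :=
      DifferentiableAt.fun_sum fun j _ => (ht j).const_mul _
    fun_prop
  set T := TT a1 b1 with hT
  let Z : Fin n2 → Finset ℝ := fun j => (ZZ_fin (a2 j) a1 b1 (b2 j)).toFinset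
  set T' := T.filter (· ∈ S) with hT'
  have hsub : S ⊆ ↑(T' ∪ Finset.univ.biUnion Z) := by
    intro t ht
    by_contra hn
    simp only [Finset.coe_union, Set.mem_union, Finset.mem_coe, not_or, Finset.mem_biUnion,
      Finset.mem_univ, true_and, not_exists] at hn
    obtain ⟨hn1', hn2'⟩ := hn
    have htT : t ∉ T := fun h => hn1' (Finset.mem_filter.2 ⟨h, ht⟩)
    refine hdiff t (fun j => relu_diff _ _ _ _ _ htT fun hh => hn2' j ?_) ht
    simpa [Z, ZZ] using ⟨htT, hh⟩
  have hle := hcon.trans (Set.encard_le_encard hsub)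
  rw [Set.encard_coe_eq_coe_finsetCard, Nat.cast_le] at hle
  have hle2 := (hle.trans (Finset.card_union_le _ _)).trans
    (Nat.add_le_add_left Finset.card_biUnion_le _)
  have hTn : T.card ≤ n1 := TT_card a1 b1
  have hT'T : T'.card ≤ T.card := Finset.card_filter_le _ _
  have hZ : ∀ j, (Z j).card ≤ n1 + 1 := fun j =>
    (ZZ_card (a2 j) a1 b1 (b2 j)).trans (Nat.succ_le_succ hTn)
  have hsum : ∑ j, (Z j).card ≤ n2 * (n1 + 1) := by
    calc _ ≤ ∑ _j : Fin n2, (n1 + 1) := Finset.sum_le_sum fun j _ => hZ j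
      _ = _ := by simp
  have hN : (n1 + 1) * (n2 + 1) - 1 = n1 + n2 * (n1 + 1) := by
    have : (n1 + 1) * (n2 + 1) = n1 + n2 * (n1 + 1) + 1 := by ring
    omega
  rw [hN] at hle2
  have hTc : T.card = n1 := by omega
  have hT'e : T' = T := Finset.eq_of_subset_of_card_le (Finset.filter_subset _ _) (by omega)
  let j0 : Fin n2 := ⟨0, by omega⟩
  have hZ0 : n1 + 1 ≤ (Z j0).card := by
    by_contra hlt
    push Not at hlt
    have : ∑ j, (Z j).card < ∑ _j : Fin n2, (n1 + 1) :=
      Finset.sum_lt_sum (fun j _ => hZ j) ⟨j0, Finset.mem_univ _, hlt⟩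
    simp only [Finset.sum_const, Finset.card_univ, Fintype.card_fin, smul_eq_mul] at this
    omega
  rw [← hTc] at hZ0
  by_cases h3 : n1 < 3
  · have : n1 = 1 ∨ n1 = 2 := by omega
    rcases this with rfl | rfl
    · exact case_one _ _ _ _ hTc hZ0
    · exact case_two _ _ _ _ hTc hZ0
  · obtain ⟨z0, r, z1, r', z2, h0, h1, h2, h3', hr, hr', -, p, q, g1, g2⟩ :=
      struct2 _ _ _ _ hZ0 (by rw [← hT]; omega)
    have hj : ∀ j : Fin n2, j = j0 := fun j => Fin.ext (by have := j.2; simp [j0]; omega)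
    have key : ∀ x ∈ T, ¬ gg (a2 j0) a1 b1 (b2 j0) x < 0 := by
      intro x hx hlt
      rw [← hT'e] at hx
      refine hdiff x (fun j => ?_) (Finset.mem_filter.1 hx).2
      rw [hj j]
      exact relu_diff_neg _ _ _ _ _ hlt
    have k1 := key r hr
    have k2 := key r' hr'
    rw [g1] at k1
    rw [g2] at k2
    push Not at k1 k2
    have s0 := nonneg_of_mul_nonneg_left k1 (by linarith)
    have s1 := nonneg_of_mul_nonneg_left k2 (by linarith)
    exact absurd p (not_lt.2 (mul_nonneg s0 s1))
end

section
/- Consider the normalized two-hidden-layer model consisting of functions f₃(t) = c^(3)·t + b^(3) + Σ_{j=1}^{n₂} a_j^(3)·σ( Σ_{k=1}^{n₁} a_{j,k}^(2)·σ(t + b_k^(1)) + s_j·t + b_j^(2) ) with s_j ∈ {−1, 0, 1} and real parameters c^(3), b^(3), a_j^(3), a_{j,k}^(2), b_k^(1), b_j^(2). Then: (i) every f₃ ∈ Y_{n₁,n₂} admits such a representation (so the normalized model equals Y_{n₁,n₂}); and (ii) the n₁·n₂ + 2·n₂ + n₁ + 2 real parameters are independent: for any one of these real parameters and any a priori fixed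 constant value of it, the class of functions representable with that parameter so fixed is a proper subset of Y_{n₁,n₂}. -/
/-- Parameters of the normalized two-hidden-layer model: the `n₁n₂ + 2n₂ + n₁ + 2`
real parameters `c³, b³, a³, a², b¹, b²` together with the sign vector `s`. -/
structure NParams2 (n1 n2 : ℕ) where
  c3 : ℝ
  b3 : ℝ
  a3 : Fin n2 → ℝ
  a2 : Fin n2 → Fin n1 → ℝ
  b1 : Fin n1 → ℝ
  b2 : Fin n2 → ℝ
  s : Fin n2 → ℝ

/-- `s` is a sign vector, `s ∈ {−1,0,1}^{n₂}`. -/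
def NParams2.valid {n1 n2 : ℕ} (p : NParams2 n1 n2) : Prop :=
  ∀ j, p.s j = -1 ∨ p.s j = 0 ∨ p.s j = 1

/-- The function realized by the normalized parameters:
`t ↦ c³·t + b³ + Σ_j a_j³·σ(Σ_k a_{j,k}²·σ(t + b_k¹) + s_j·t + b_j²)`. -/
noncomputable def NParams2.fn {n1 n2 : ℕ} (p : NParams2 n1 n2) : ℝ → ℝ :=
  fun t => p.c3 * t + p.b3 +
    ∑ j, p.a3 j * relu ((∑ k, p.a2 j k * relu (t + p.b1 k)) + p.s j * t + p.b2 j)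

/-- Index type enumerating the real parameters of the normalized model. -/
inductive PIdx2 (n1 n2 : ℕ) where
  | c3 : PIdx2 n1 n2
  | b3 : PIdx2 n1 n2
  | a3 (j : Fin n2) : PIdx2 n1 n2
  | a2 (j : Fin n2) (k : Fin n1) : PIdx2 n1 n2
  | b1 (k : Fin n1) : PIdx2 n1 n2
  | b2 (j : Fin n2) : PIdx2 n1 n2

/-- Read off the real parameter with the given index. -/
def NParams2.get {n1 n2 : ℕ} (p : NParams2 n1 n2) : PIdx2 n1 n2 → ℝ
  | .c3 => p.c3
  | .b3 => p.b3
  | .a3 j => p.a3 j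
  | .a2 j k => p.a2 j k
  | .b1 k => p.b1 k
  | .b2 j => p.b2 j

open Filter Topology

instance instFinitePIdx2 (n1 n2 : ℕ) : Finite (PIdx2 n1 n2) := by
  let e : PIdx2 n1 n2 → Bool ⊕ Fin n2 ⊕ (Fin n2 × Fin n1) ⊕ Fin n1 ⊕ Fin n2 := fun i =>
    match i with
    | .c3 => .inl true
    | .b3 => .inl false
    | .a3 j => .inr (.inl j)
    | .a2 j k => .inr (.inr (.inl (j, k)))
    | .b1 k => .inr (.inr (.inr (.inl k)))
    | .b2 j => .inr (.inr (.inr (.inr j)))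
  apply Finite.of_injective e
  intro x y h
  cases x <;> cases y <;> simp_all [e]

noncomputable instance instFintypePIdx2 (n1 n2 : ℕ) : Fintype (PIdx2 n1 n2) := Fintype.ofFinite _

/-- Network as a function of the parameter vector. -/
noncomputable def netP {n1 n2 : ℕ} (s : Fin n2 → ℝ) (θ : PIdx2 n1 n2 → ℝ) (t : ℝ) : ℝ :=
  θ .c3 * t + θ .b3 +
    ∑ j, θ (.a3 j) * relu ((∑ k, θ (.a2 j k) * relu (t + θ (.b1 k))) + s j * t + θ (.b2 j))

section lip
variable {E : Type*} [NormedAddCommGroup E]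

lemma ll_add {f g : E → ℝ} (hf : LocallyLipschitz f) (hg : LocallyLipschitz g) :
    LocallyLipschitz (fun x => f x + g x) := by
  have h : LocallyLipschitz (fun p : ℝ × ℝ => p.1 + p.2) :=
    ContDiff.locallyLipschitz (𝕂 := ℝ) (by fun_prop)
  exact h.comp (hf.prodMk hg)

lemma ll_mul {f g : E → ℝ} (hf : LocallyLipschitz f) (hg : LocallyLipschitz g) :
    LocallyLipschitz (fun x => f x * g x) := by
  have h : LocallyLipschitz (fun p : ℝ × ℝ => p.1 * p.2) :=
    ContDiff.locallyLipschitz (𝕂 := ℝ) (by fun_prop)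
  exact h.comp (hf.prodMk hg)

lemma ll_sum {ι : Type*} (s : Finset ι) {f : ι → E → ℝ} (hf : ∀ i, LocallyLipschitz (f i)) :
    LocallyLipschitz (fun x => ∑ i ∈ s, f i x) := by
  classical
  induction s using Finset.induction_on with
  | empty => simpa using LocallyLipschitz.const (0 : ℝ)
  | insert a s ha ih =>
    simp only [Finset.sum_insert ha]
    exact ll_add (hf a) ih

lemma ll_relu {f : E → ℝ} (hf : LocallyLipschitz f) : LocallyLipschitz (fun x => relu (f x)) := by
  have h : LipschitzWith 1 relu := LipschitzWith.id.max_const 0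
  exact h.locallyLipschitz.comp hf

lemma ll_pi {ι : Type*} [Fintype ι] {f : E → ι → ℝ} (hf : ∀ i, LocallyLipschitz (fun x => f x i)) :
    LocallyLipschitz f := by
  intro x
  choose K t ht hK using fun i => hf i x
  refine ⟨∑ i, K i, ⋂ i, t i, Filter.iInter_mem.2 ht, ?_⟩
  intro y hy z hz
  rw [edist_pi_le_iff]
  intro i
  refine (hK i (Set.mem_iInter.1 hy i) (Set.mem_iInter.1 hz i)).trans ?_
  gcongr
  exact Finset.single_le_sum (f := K) (fun _ _ => zero_le) (Finset.mem_univ i)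

end lip

lemma ll_net {n1 n2 : ℕ} (s : Fin n2 → ℝ) (t : ℝ) :
    LocallyLipschitz (fun θ : PIdx2 n1 n2 → ℝ => netP s θ t) := by
  have hp : ∀ i, LocallyLipschitz (fun θ : PIdx2 n1 n2 → ℝ => θ i) := fun i =>
    ContDiff.locallyLipschitz (𝕂 := ℝ) (by fun_prop)
  have hc : ∀ c : ℝ, LocallyLipschitz (fun _ : PIdx2 n1 n2 → ℝ => c) := fun c =>
    LocallyLipschitz.const c
  unfold netP
  refine ll_add (ll_add (ll_mul (hp _) (hc _)) (hp _)) (ll_sum _ fun j => ll_mul (hp _) (ll_relu ?_))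
  refine ll_add (ll_add (ll_sum _ fun k => ll_mul (hp _) (ll_relu ?_)) (hc _)) (hp _)
  exact ll_add (hc _) (hp _)

/-- Sample indices: neuron, piece, side, distance. -/
abbrev Smp (n1 n2 : ℕ) := Fin n2 × Fin (n1 + 1) × Bool × Bool

noncomputable def xx (p q : Bool) : ℝ := (if p then 1 else -1) * (if q then 2 else 1)

noncomputable def DD (n2 : ℕ) : ℝ := 4 * n2 + 4

noncomputable def smpT {n1 n2 : ℕ} (q : Smp n1 n2) : ℝ :=
  2 * (q.2.1 : ℕ) * DD n2 + (-1) ^ (q.2.1 : ℕ) * (xx q.2.2.1 q.2.2.2 - 4 * (q.1 : ℕ))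

noncomputable def th0 (n1 n2 : ℕ) : PIdx2 n1 n2 → ℝ
  | .c3 => 0
  | .b3 => 0
  | .a3 _ => 1
  | .a2 _ k => -2 * (-1) ^ (k : ℕ)
  | .b1 k => -((2 * (k : ℕ) + 1) * DD n2)
  | .b2 j => 4 * (j : ℕ)

noncomputable def hh (m k : ℕ) : ℝ := if k < m then 1 else 0

noncomputable def HH {n1 n2 : ℕ} (q : Smp n1 n2) (j : Fin n2) : ℝ :=
  if q.1 < j ∨ (j = q.1 ∧ q.2.2.1 = true) then 1 else 0

/-- inner affine pre-activation with frozen first-layer pattern -/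
noncomputable def uu {n1 n2 : ℕ} (m : ℕ) (t : ℝ) (j : Fin n2) (θ : PIdx2 n1 n2 → ℝ) : ℝ :=
  (∑ k, θ (.a2 j k) * (hh m k * (t + θ (.b1 k)))) + 1 * t + θ (.b2 j)

noncomputable def PP {n1 n2 : ℕ} (q : Smp n1 n2) (θ : PIdx2 n1 n2 → ℝ) : ℝ :=
  θ .c3 * smpT q + θ .b3 + ∑ j, θ (.a3 j) * (HH q j * uu q.2.1 (smpT q) j θ)

lemma hh_step {n1 : ℕ} (f : Fin n1 → ℝ) (m : Fin n1) :
    ∑ k : Fin n1, hh ((m : ℕ) + 1) k * f k = (∑ k : Fin n1, hh m k * f k) + f m := by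
  have : f m = ∑ k, if k = m then f k else 0 := by simp
  rw [this, ← Finset.sum_add_distrib]
  refine Finset.sum_congr rfl fun k _ => ?_
  unfold hh
  rcases lt_trichotomy k m with h | h | h
  · have h1 : (k : ℕ) < m := h
    have : k ≠ m := h.ne
    simp [h1, this, Nat.lt_succ_of_lt h1]
  · subst h; simp
  · have h1 : (m : ℕ) < k := h
    have : k ≠ m := h.ne'
    have h2 : ¬ (k : ℕ) < m + 1 := by omega
    have h3 : ¬ (k : ℕ) < m := by omega
    simp [h2, h3, this]

lemma base_sum {n1 : ℕ} (D t : ℝ) (m : ℕ) (hm : m ≤ n1) :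
    ∑ k : Fin n1, hh m k * (-2 * (-1) ^ (k : ℕ) * (t + -((2 * (k : ℕ) + 1) * D)))
      = (-1) ^ m * (t - 2 * m * D) - t := by
  induction m with
  | zero => simp [hh]
  | succ m ih =>
    have := hh_step (fun k : Fin n1 => (-2 * (-1) ^ (k : ℕ) * (t + -((2 * (k : ℕ) + 1) * D))))
      ⟨m, hm⟩
    simp only at this
    rw [this, ih (by omega)]
    push_cast
    ring

lemma uu_th0 {n1 n2 : ℕ} (m : ℕ) (hm : m ≤ n1) (t : ℝ) (j : Fin n2) :
    uu m t j (th0 n1 n2) = (-1) ^ m * (t - 2 * m * DD n2) + 4 * (j : ℕ) := by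
  have := base_sum (n1 := n1) (DD n2) t m hm
  unfold uu
  simp only [th0]
  have h2 : ∑ k : Fin n1, -2 * (-1) ^ (k : ℕ) * (hh m k * (t + -((2 * (k : ℕ) + 1) * DD n2)))
      = (-1) ^ m * (t - 2 * m * DD n2) - t := by
    rw [← this]
    exact Finset.sum_congr rfl fun k _ => by ring
  rw [h2]; ring

lemma sgn_sq (m : ℕ) : ((-1 : ℝ) ^ m) * (-1) ^ m = 1 := by
  rw [← mul_pow]; simp

lemma uu_smp {n1 n2 : ℕ} (q : Smp n1 n2) (j : Fin n2) :
    uu q.2.1 (smpT q) j (th0 n1 n2)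
      = xx q.2.2.1 q.2.2.2 + 4 * ((j : ℕ) - (q.1 : ℕ) : ℝ) := by
  rw [uu_th0 _ (by omega)]
  unfold smpT
  linear_combination (xx q.2.2.1 q.2.2.2 - 4 * (q.1 : ℕ)) * sgn_sq q.2.1

lemma xx_abs (p q : Bool) : |xx p q| ≤ 2 := by
  cases p <;> cases q <;> norm_num [xx]

lemma ev_relu {E : Type*} [TopologicalSpace E] (u : E → ℝ) (a : E) (hu : ContinuousAt u a) (h : ℝ)
    (hc : (0 < u a ∧ h = 1) ∨ (u a < 0 ∧ h = 0)) : ∀ᶠ x in 𝓝 a, relu (u x) = h * u x := by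
  rcases hc with ⟨h0, rfl⟩ | ⟨h0, rfl⟩
  · filter_upwards [hu.eventually (lt_mem_nhds h0)] with x hx
    simp [relu, hx.le]
  · filter_upwards [hu.eventually (gt_mem_nhds h0)] with x hx
    simp [relu, hx.le]

lemma first_sign {n1 n2 : ℕ} (q : Smp n1 n2) (k : Fin n1) :
    (0 < smpT q + th0 n1 n2 (.b1 k) ∧ hh q.2.1 k = 1) ∨
    (smpT q + th0 n1 n2 (.b1 k) < 0 ∧ hh q.2.1 k = 0) := by
  obtain ⟨j, m, p, r⟩ := q
  have hD : DD n2 = 4 * n2 + 4 := rfl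
  have hj : ((j : ℕ) : ℝ) + 1 ≤ n2 := by exact_mod_cast j.2
  have hj0 : (0 : ℝ) ≤ ((j : ℕ) : ℝ) := by positivity
  have hx := abs_le.1 (xx_abs p r)
  have hD0 : 0 < DD n2 := by rw [hD]; positivity
  have key : |(-1 : ℝ) ^ (m : ℕ) * (xx p r - 4 * (j : ℕ))| < DD n2 := by
    rw [abs_mul, abs_pow, abs_neg, abs_one, one_pow, one_mul, abs_lt]
    constructor <;> linarith [hx.1, hx.2]
  have key := abs_lt.1 key
  simp only [smpT, th0, hh]
  by_cases h : (k : ℕ) < m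
  · left
    have : ((k : ℕ) : ℝ) + 1 ≤ (m : ℕ) := by exact_mod_cast h
    refine ⟨?_, by simp [h]⟩
    nlinarith [key.1]
  · right
    have : ((m : ℕ) : ℝ) ≤ (k : ℕ) := by exact_mod_cast not_lt.1 h
    refine ⟨?_, by simp [h]⟩
    nlinarith [key.2]

lemma second_sign {n1 n2 : ℕ} (q : Smp n1 n2) (j : Fin n2) :
    (0 < uu q.2.1 (smpT q) j (th0 n1 n2) ∧ HH q j = 1) ∨
    (uu q.2.1 (smpT q) j (th0 n1 n2) < 0 ∧ HH q j = 0) := by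
  rw [uu_smp]
  obtain ⟨i, m, p, r⟩ := q
  have hx := abs_le.1 (xx_abs p r)
  simp only [HH]
  rcases lt_trichotomy i j with h | h | h
  · left
    have : ((i : ℕ) : ℝ) + 1 ≤ (j : ℕ) := by exact_mod_cast h
    exact ⟨by linarith [hx.1], by simp [h]⟩
  · subst h
    cases p
    · right
      refine ⟨?_, by simp⟩
      cases r <;> norm_num [xx]
    · left
      refine ⟨?_, by simp⟩
      cases r <;> norm_num [xx]
  · right
    have : ((j : ℕ) : ℝ) + 1 ≤ (i : ℕ) := by exact_mod_cast h
    exact ⟨by linarith [hx.2], by simp [h.ne, not_lt.2 h.le]⟩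

lemma net_eq_PP {n1 n2 : ℕ} (q : Smp n1 n2) :
    ∀ᶠ θ in 𝓝 (th0 n1 n2), netP (fun _ => 1) θ (smpT q) = PP q θ := by
  have h1 : ∀ᶠ θ in 𝓝 (th0 n1 n2), ∀ k : Fin n1,
      relu (smpT q + θ (.b1 k)) = hh q.2.1 k * (smpT q + θ (.b1 k)) :=
    eventually_all.2 fun k =>
      ev_relu (fun θ : PIdx2 n1 n2 → ℝ => smpT q + θ (.b1 k)) _
        (continuous_const.add (continuous_apply _)).continuousAt _ (first_sign q k)
  have h2 : ∀ᶠ θ in 𝓝 (th0 n1 n2), ∀ j : Fin n2,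
      relu (uu q.2.1 (smpT q) j θ) = HH q j * uu q.2.1 (smpT q) j θ :=
    eventually_all.2 fun j =>
      ev_relu (fun θ : PIdx2 n1 n2 → ℝ => uu q.2.1 (smpT q) j θ) _ (by unfold uu; fun_prop) _
        (second_sign q j)
  filter_upwards [h1, h2] with θ h1 h2
  simp only [netP, PP, h1]
  congr 1
  refine Finset.sum_congr rfl fun j _ => ?_
  rw [← h2 j]; rfl

/-- The directional derivative. -/
noncomputable def pw {n1 n2 : ℕ} (m : ℕ) (t : ℝ) (j : Fin n2) (v : PIdx2 n1 n2 → ℝ) : ℝ :=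
  v (.a3 j) * uu m t j (th0 n1 n2) +
    ((∑ k : Fin n1, hh m k * (v (.a2 j k) * (t - (2 * (k : ℕ) + 1) * DD n2)
      + -2 * (-1) ^ (k : ℕ) * v (.b1 k))) + v (.b2 j))

lemma PP_line {n1 n2 : ℕ} (q : Smp n1 n2) (v : PIdx2 n1 n2 → ℝ) :
    HasDerivAt (fun r : ℝ => PP q (th0 n1 n2 + r • v))
      (v .c3 * smpT q + v .b3 + ∑ j, HH q j * pw q.2.1 (smpT q) j v) 0 := by
  have hi : ∀ i, HasDerivAt (fun r : ℝ => (th0 n1 n2 + r • v) i) (v i) 0 := by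
    intro i
    simpa using ((hasDerivAt_id (0 : ℝ)).mul_const (v i)).const_add (th0 n1 n2 i)
  have hu : ∀ j, HasDerivAt (fun r : ℝ => uu q.2.1 (smpT q) j (th0 n1 n2 + r • v))
      ((∑ k : Fin n1, hh q.2.1 k * (v (.a2 j k) * (smpT q - (2 * (k : ℕ) + 1) * DD n2)
      + -2 * (-1) ^ (k : ℕ) * v (.b1 k))) + v (.b2 j)) 0 := by
    intro j
    unfold uu
    have := ((HasDerivAt.fun_sum (u := Finset.univ) fun (k : Fin n1) _ =>
      (hi (.a2 j k)).mul (((hi (.b1 k)).const_add (smpT q)).const_mul (hh q.2.1 k))).add_const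
        (1 * smpT q)).add (hi (.b2 j))
    refine this.congr_deriv ?_
    congr 1
    refine Finset.sum_congr rfl fun k _ => ?_
    simp [th0]
    ring
  unfold PP
  have := (((hi .c3).mul_const (smpT q)).add (hi .b3)).add
    (HasDerivAt.fun_sum (u := Finset.univ) fun (j : Fin n2) _ =>
      (hi (.a3 j)).mul ((hu j).const_mul (HH q j)))
  refine this.congr_deriv ?_
  congr 1
  refine Finset.sum_congr rfl fun j _ => ?_
  simp [th0, pw]
  ring

lemma PP_contDiff {n1 n2 : ℕ} : ContDiff ℝ 1 (fun (θ : PIdx2 n1 n2 → ℝ) (q : Smp n1 n2) => PP q θ) := by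
  rw [contDiff_pi]
  intro q
  unfold PP uu
  fun_prop

/-- slope and intercept of `pw` as an affine function of `t` -/
noncomputable def Aco {n1 n2 : ℕ} (m : ℕ) (j : Fin n2) (v : PIdx2 n1 n2 → ℝ) : ℝ :=
  v (.a3 j) * (-1) ^ m + ∑ k : Fin n1, hh m k * v (.a2 j k)

noncomputable def Bco {n1 n2 : ℕ} (m : ℕ) (j : Fin n2) (v : PIdx2 n1 n2 → ℝ) : ℝ :=
  v (.a3 j) * ((-1) ^ m * (- (2 * m * DD n2)) + 4 * (j : ℕ)) +
    (∑ k : Fin n1, hh m k * (v (.a2 j k) * (- ((2 * (k : ℕ) + 1) * DD n2))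
      + -2 * (-1) ^ (k : ℕ) * v (.b1 k))) + v (.b2 j)

lemma pw_eq {n1 n2 : ℕ} (m : ℕ) (hm : m ≤ n1) (t : ℝ) (j : Fin n2) (v : PIdx2 n1 n2 → ℝ) :
    pw m t j v = Aco m j v * t + Bco m j v := by
  unfold pw Aco Bco
  rw [uu_th0 m hm]
  have : ∑ k : Fin n1, hh m k * (v (.a2 j k) * (t - (2 * (k : ℕ) + 1) * DD n2)
      + -2 * (-1) ^ (k : ℕ) * v (.b1 k)) = (∑ k : Fin n1, hh m k * v (.a2 j k)) * t +
      ∑ k : Fin n1, hh m k * (v (.a2 j k) * (- ((2 * (k : ℕ) + 1) * DD n2))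
      + -2 * (-1) ^ (k : ℕ) * v (.b1 k)) := by
    rw [Finset.sum_mul, ← Finset.sum_add_distrib]
    exact Finset.sum_congr rfl fun k _ => by ring
  rw [this]; ring

lemma affine_zero {A B t1 t2 : ℝ} (h : t1 ≠ t2) (h1 : A * t1 + B = 0) (h2 : A * t2 + B = 0) :
    A = 0 ∧ B = 0 := by
  have : A * (t1 - t2) = 0 := by linarith
  rcases mul_eq_zero.1 this with h3 | h3
  · subst h3; exact ⟨rfl, by linarith⟩
  · exact absurd (sub_eq_zero.1 h3) h

lemma smp_ne {n1 n2 : ℕ} (j : Fin n2) (m : Fin (n1 + 1)) (p : Bool) :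
    smpT (j, m, p, false) ≠ smpT (j, m, p, true) := by
  intro h
  unfold smpT at h
  have h0 : (-1 : ℝ) ^ (m : ℕ) ≠ 0 := pow_ne_zero _ (by norm_num)
  have := mul_left_cancel₀ h0 (add_left_cancel h)
  cases p <;> norm_num [xx] at this

lemma inj_core {n1 n2 : ℕ} (hn2 : 1 ≤ n2) (v : PIdx2 n1 n2 → ℝ)
    (hv : ∀ q : Smp n1 n2, v .c3 * smpT q + v .b3 + ∑ j, HH q j * pw q.2.1 (smpT q) j v = 0) :
    v = 0 := by
  have main : ∀ (j : Fin n2) (m : Fin (n1 + 1)),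
      (v .c3 + ∑ i, (if j < i then Aco m i v else 0) = 0 ∧
       v .b3 + ∑ i, (if j < i then Bco m i v else 0) = 0) ∧ (Aco m j v = 0 ∧ Bco m j v = 0) := by
    intro j m
    have e : ∀ p r, ∑ i, HH (j, m, p, r) i * pw m (smpT (j, m, p, r)) i v =
        (∑ i, (if j < i then Aco m i v else 0)) * smpT (j, m, p, r) +
        (∑ i, (if j < i then Bco m i v else 0)) +
        (if p then Aco m j v * smpT (j, m, p, r) + Bco m j v else 0) := by
      intro p r
      have : (if p then Aco m j v * smpT (j, m, p, r) + Bco m j v else 0) =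
        ∑ i, if i = j then (if p then Aco m i v * smpT (j, m, p, r) + Bco m i v else 0) else 0 := by
        simp
      rw [this, Finset.sum_mul, ← Finset.sum_add_distrib, ← Finset.sum_add_distrib]
      refine Finset.sum_congr rfl fun i _ => ?_
      rw [pw_eq m (by omega)]
      simp only [HH]
      rcases lt_trichotomy j i with h | h | h
      · simp [h, h.ne']
      · subst h; cases p <;> simp
      · simp [h.ne, not_lt.2 h.le]
    have h1 := hv (j, m, false, false)
    have h2 := hv (j, m, false, true)
    have h3 := hv (j, m, true, false)
    have h4 := hv (j, m, true, true)
    simp only [e] at h1 h2 h3 h4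
    simp only [Bool.false_eq_true, if_false, if_true] at h1 h2 h3 h4
    obtain ⟨ha, hb⟩ := affine_zero (A := v .c3 + ∑ i, (if j < i then Aco m i v else 0))
      (B := v .b3 + ∑ i, (if j < i then Bco m i v else 0)) (smp_ne j m false)
      (by linarith) (by linarith)
    refine ⟨⟨ha, hb⟩, affine_zero (smp_ne j m true) ?_ ?_⟩
    · linear_combination h3 - smpT (j, m, true, false) * ha - hb
    · linear_combination h4 - smpT (j, m, true, true) * ha - hb
  have hA : ∀ (j : Fin n2) (m : ℕ), m ≤ n1 → Aco m j v = 0 := fun j m hm =>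
    (main j ⟨m, by omega⟩).2.1
  have hB : ∀ (j : Fin n2) (m : ℕ), m ≤ n1 → Bco m j v = 0 := fun j m hm =>
    (main j ⟨m, by omega⟩).2.2
  have ha3 : ∀ j, v (.a3 j) = 0 := fun j => by simpa [Aco, hh] using hA j 0 (by omega)
  have hb2 : ∀ j, v (.b2 j) = 0 := fun j => by
    simpa [Bco, hh, ha3 j] using hB j 0 (by omega)
  have ha2 : ∀ j k, v (.a2 j k) = 0 := fun j k => by
    have h1 := hA j k (by omega)
    have h2 := hA j (k + 1) (by omega)
    have h3 := hh_step (fun k => v (.a2 j k)) k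
    simp only [Aco, ha3 j] at h1 h2
    rw [h3] at h2
    linarith
  have hb1 : ∀ k, v (.b1 k) = 0 := fun k => by
    have h1 := hB ⟨0, hn2⟩ k (by omega)
    have h2 := hB ⟨0, hn2⟩ (k + 1) (by omega)
    have h3 := hh_step (fun k => (v (.a2 ⟨0, hn2⟩ k) * (- ((2 * (k : ℕ) + 1) * DD n2))
      + -2 * (-1) ^ (k : ℕ) * v (.b1 k))) k
    simp only [Bco, ha3] at h1 h2
    rw [h3] at h2
    have h0 : (-1 : ℝ) ^ (k : ℕ) ≠ 0 := pow_ne_zero _ (by norm_num)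
    have : (-2 * (-1 : ℝ) ^ (k : ℕ)) * v (.b1 k) = 0 := by
      have := ha2 ⟨0, hn2⟩ k
      rw [this] at h2
      linarith
    exact (mul_eq_zero.1 this).resolve_left (mul_ne_zero (by norm_num) h0)
  have hm := (main ⟨0, hn2⟩ 0).1
  have hA0 : ∀ j, Aco ((0 : Fin (n1 + 1)) : ℕ) j v = 0 := fun j => (main j 0).2.1
  have hB0 : ∀ j, Bco ((0 : Fin (n1 + 1)) : ℕ) j v = 0 := fun j => (main j 0).2.2
  simp only [hA0, hB0] at hm
  funext i
  cases i with
  | c3 => simpa using hm.1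
  | b3 => simpa using hm.2
  | a3 j => exact ha3 j
  | a2 j k => exact ha2 j k
  | b1 k => exact hb1 k
  | b2 j => exact hb2 j

/-- The samples, linearly post-composed, fill a neighbourhood. -/
lemma exists_nhds {n1 n2 : ℕ} (hn2 : 1 ≤ n2) :
    ∃ L : (Smp n1 n2 → ℝ) →L[ℝ] (PIdx2 n1 n2 → ℝ), ∃ y,
      Set.range (fun θ : PIdx2 n1 n2 → ℝ => L (fun q => netP (fun _ => 1) θ (smpT q))) ∈ 𝓝 y := by
  set P : (PIdx2 n1 n2 → ℝ) → (Smp n1 n2 → ℝ) := fun θ q => PP q θ with hP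
  have hs : HasStrictFDerivAt P (fderiv ℝ P (th0 n1 n2)) (th0 n1 n2) :=
    (PP_contDiff.contDiffAt).hasStrictFDerivAt (by norm_num)
  set P' := fderiv ℝ P (th0 n1 n2) with hP'
  have hker : LinearMap.ker (P' : (PIdx2 n1 n2 → ℝ) →ₗ[ℝ] (Smp n1 n2 → ℝ)) = ⊥ := by
    rw [LinearMap.ker_eq_bot']
    intro v hv
    apply inj_core hn2
    intro q
    have h0 : P' v = 0 := hv
    have hl : HasDerivAt (fun r : ℝ => th0 n1 n2 + r • v) v 0 := by
      simpa using ((hasDerivAt_id (0 : ℝ)).smul_const v).const_add (th0 n1 n2)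
    have hc : HasDerivAt (fun r : ℝ => P (th0 n1 n2 + r • v)) (P' v) 0 := by
      have hf : HasFDerivAt P P' (th0 n1 n2 + (0 : ℝ) • v) := by simpa using hs.hasFDerivAt
      exact hf.comp_hasDerivAt (0 : ℝ) hl
    have hq := (hasDerivAt_pi.1 hc) q
    rw [h0] at hq
    exact (PP_line q v).unique hq
  obtain ⟨g, hg⟩ := LinearMap.exists_leftInverse_of_injective _ hker
  let L : (Smp n1 n2 → ℝ) →L[ℝ] (PIdx2 n1 n2 → ℝ) := LinearMap.toContinuousLinearMap g
  refine ⟨L, L (P (th0 n1 n2)), ?_⟩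
  have hcomp : HasStrictFDerivAt (fun θ => L (P θ)) (L.comp P') (th0 n1 n2) :=
    L.hasStrictFDerivAt.comp _ hs
  have hsurj : (L.comp P').range = ⊤ := by
    rw [LinearMap.range_eq_top]
    intro y
    exact ⟨y, LinearMap.congr_fun hg y⟩
  have hmap := hcomp.map_nhds_eq_of_surj hsurj
  have hev : ∀ᶠ θ in 𝓝 (th0 n1 n2), ∀ q : Smp n1 n2,
      netP (fun _ => 1) θ (smpT q) = PP q θ := eventually_all.2 net_eq_PP
  rw [← hmap]
  refine mem_map.2 ?_
  filter_upwards [hev] with θ hθ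
  refine ⟨θ, ?_⟩
  simp only [hθ, hP]

lemma relu_norm (a b : ℝ) : ∃ α β γ δ : ℝ, ∀ t, relu (a * t + b) = α * relu (t + β) + γ * t + δ := by
  rcases lt_trichotomy a 0 with h | h | h
  · refine ⟨-a, b / a, a, b, fun t => ?_⟩
    have h0 : a ≠ 0 := by first | exact h.ne | exact h.ne'
    have e : a * t + b = a * (t + b / a) := by field_simp
    unfold relu
    rcases le_total (t + b / a) 0 with h1 | h1
    · rw [max_eq_right h1, max_eq_left (by rw [e]; nlinarith)]; ring
    · rw [max_eq_left h1, max_eq_right (by rw [e]; nlinarith)]; linarith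
  · exact ⟨0, 0, 0, relu b, fun t => by simp [h]⟩
  · refine ⟨a, b / a, 0, 0, fun t => ?_⟩
    have h0 : a ≠ 0 := by first | exact h.ne | exact h.ne'
    have e : a * t + b = a * (t + b / a) := by field_simp
    unfold relu
    rcases le_total (t + b / a) 0 with h1 | h1
    · rw [max_eq_right h1, max_eq_right (by rw [e]; nlinarith)]; ring
    · rw [max_eq_left h1, max_eq_left (by rw [e]; nlinarith), e]; ring

lemma relu_pos_mul (c x : ℝ) (hc : 0 < c) : relu (c * x) = c * relu x := by
  unfold relu
  rw [mul_max_of_nonneg _ _ hc.le, mul_zero]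

lemma scale_norm (c : ℝ) : ∃ s d : ℝ, (s = -1 ∨ s = 0 ∨ s = 1) ∧ 0 < d ∧ c = d * s := by
  rcases lt_trichotomy c 0 with h | h | h
  · exact ⟨-1, -c, by simp, by linarith, by ring⟩
  · exact ⟨0, 1, by simp, by simp, by simp [h]⟩
  · exact ⟨1, c, by simp, h, by ring⟩

lemma normalize_net {n1 n2 : ℕ} (f : ℝ → ℝ) (hf : IsReLU2 n1 n2 f) :
    ∃ p : NParams2 n1 n2, p.valid ∧ ∀ t, f t = p.fn t := by
  obtain ⟨a1, b1, a2, c2, b2, a3, c3, b3, h⟩ := hf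
  choose α β γ δ hr using fun k => relu_norm (a1 k) (b1 k)
  choose s d hs hd hc using fun j => scale_norm ((∑ k, a2 j k * γ k) + c2 j)
  refine ⟨⟨c3, b3, fun j => a3 j * d j, fun j k => a2 j k * α k / d j, β,
    fun j => ((∑ k, a2 j k * δ k) + b2 j) / d j, s⟩, hs, fun t => ?_⟩
  rw [h t]
  simp only [NParams2.fn]
  congr 1
  refine Finset.sum_congr rfl fun j _ => ?_
  rw [mul_assoc, ← relu_pos_mul _ _ (hd j)]
  congr 2
  have hd0 := (hd j).ne'
  have e1 : ∑ k, a2 j k * relu (a1 k * t + b1 k) = (∑ k, a2 j k * α k * relu (t + β k))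
      + (∑ k, a2 j k * γ k) * t + ∑ k, a2 j k * δ k := by
    rw [Finset.sum_mul, ← Finset.sum_add_distrib, ← Finset.sum_add_distrib]
    exact Finset.sum_congr rfl fun k _ => by rw [hr]; ring
  have e2 : d j * (∑ k, a2 j k * α k / d j * relu (t + β k)) =
      ∑ k, a2 j k * α k * relu (t + β k) := by
    rw [Finset.mul_sum]
    exact Finset.sum_congr rfl fun k _ => by field_simp
  have e3 : d j * (((∑ k, a2 j k * δ k) + b2 j) / d j) = (∑ k, a2 j k * δ k) + b2 j := by
    field_simp
  rw [e1, mul_add, mul_add, e2, e3]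
  linear_combination t * hc j

lemma fn_mem {n1 n2 : ℕ} (p : NParams2 n1 n2) : IsReLU2 n1 n2 p.fn :=
  ⟨fun _ => 1, p.b1, p.a2, p.s, p.b2, p.a3, p.c3, p.b3, fun t => by simp [NParams2.fn]⟩

lemma net_mem {n1 n2 : ℕ} (θ : PIdx2 n1 n2 → ℝ) : IsReLU2 n1 n2 (netP (fun _ => 1) θ) :=
  ⟨fun _ => 1, fun k => θ (.b1 k), fun j k => θ (.a2 j k), fun _ => 1, fun j => θ (.b2 j),
    fun j => θ (.a3 j), θ .c3, θ .b3, fun t => by simp [netP]⟩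

lemma strict {n1 n2 : ℕ} (hn2 : 1 ≤ n2) (i : PIdx2 n1 n2) (v : ℝ)
    (H : ∀ f : ℝ → ℝ, IsReLU2 n1 n2 f →
      ∃ p : NParams2 n1 n2, p.valid ∧ p.get i = v ∧ ∀ t, f t = p.fn t) : False := by
  classical
  obtain ⟨L, y, hy⟩ := exists_nhds (n1 := n1) hn2
  have hdim := Real.dimH_of_mem_nhds hy
  let sg : (Fin n2 → Fin 3) → Fin n2 → ℝ := fun σ j => ![-1, 0, 1] (σ j)
  let ext : ({j // j ≠ i} → ℝ) → (PIdx2 n1 n2 → ℝ) := fun w j => if h : j = i then v else w ⟨j, h⟩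
  let G : (Fin n2 → Fin 3) → ({j // j ≠ i} → ℝ) → (PIdx2 n1 n2 → ℝ) :=
    fun σ w => L (fun q => netP (sg σ) (ext w) (smpT q))
  have hG : ∀ σ, LocallyLipschitz (G σ) := by
    intro σ
    have hext : LocallyLipschitz ext := by
      apply ll_pi
      intro j
      by_cases h : j = i
      · simpa [ext, h] using LocallyLipschitz.const v
      · simp only [ext, h, dite_false]
        exact ContDiff.locallyLipschitz (𝕂 := ℝ) (by fun_prop)
    have hnet : LocallyLipschitz
        (fun θ : PIdx2 n1 n2 → ℝ => fun q : Smp n1 n2 => netP (sg σ) θ (smpT q)) :=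
      ll_pi fun q => ll_net _ _
    exact L.lipschitz.locallyLipschitz.comp (hnet.comp hext)
  have hsub : Set.range (fun θ : PIdx2 n1 n2 → ℝ => L (fun q => netP (fun _ => 1) θ (smpT q)))
      ⊆ ⋃ σ, Set.range (G σ) := by
    rintro _ ⟨θ, rfl⟩
    obtain ⟨p, hp, hpi, hpf⟩ := H _ (net_mem θ)
    have hσ : ∀ j, ∃ a : Fin 3, ![(-1 : ℝ), 0, 1] a = p.s j := by
      intro j
      rcases hp j with h | h | h
      · exact ⟨0, by simp [h]⟩
      · exact ⟨1, by simp [h]⟩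
      · exact ⟨2, by simp [h]⟩
    choose σ hσ using hσ
    refine Set.mem_iUnion.2 ⟨σ, fun j => p.get j, ?_⟩
    have he : ext (fun j => p.get j) = p.get := by
      funext j
      by_cases h : j = i
      · subst h; simp [ext, hpi]
      · simp [ext, h]
    have hsg : sg σ = p.s := funext hσ
    simp only [G, he, hsg]
    congr 1
    funext q
    rw [hpf]
    rfl
  have h1 := dimH_mono hsub
  rw [hdim, dimH_iUnion] at h1
  have h2 : (⨆ σ, dimH (Set.range (G σ))) ≤ (Fintype.card {j // j ≠ i} : ENNReal) :=
    iSup_le fun σ => (dimH_range_le_of_locally_lipschitzOn (hG σ)).trans_eq (Real.dimH_univ_pi _)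
  have h3 := h1.trans h2
  rw [Module.finrank_fintype_fun_eq_card] at h3
  have h4 : Fintype.card (PIdx2 n1 n2) ≤ Fintype.card {j // j ≠ i} := by exact_mod_cast h3
  have h5 : Fintype.card {j // j ≠ i} < Fintype.card (PIdx2 n1 n2) :=
    Fintype.card_subtype_lt (x := i) (by simp)
  omega

/-- (i) the normalized model equals `Y_{n₁,n₂}`, and (ii) its real
parameters are independent: fixing any one of them to any a priori constant value
yields a proper subclass of `Y_{n₁,n₂}`. -/
theorem two_layer_parameter_independence (n1 n2 : ℕ) (hn1 : 1 ≤ n1) (hn2 : 2 ≤ n2) :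
    (∀ f : ℝ → ℝ, IsReLU2 n1 n2 f →
      ∃ p : NParams2 n1 n2, p.valid ∧ ∀ t, f t = p.fn t) ∧
    (∀ p : NParams2 n1 n2, p.valid → IsReLU2 n1 n2 p.fn) ∧
    (∀ (i : PIdx2 n1 n2) (v : ℝ),
      {f : ℝ → ℝ | ∃ p : NParams2 n1 n2, p.valid ∧ p.get i = v ∧ ∀ t, f t = p.fn t}
        ⊂ {f : ℝ → ℝ | IsReLU2 n1 n2 f}) := by
  refine ⟨normalize_net, fun p _ => fn_mem p, fun i v => ?_⟩
  rw [Set.ssubset_iff_subset_ne]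
  constructor
  · rintro f ⟨p, _, _, hf⟩
    have : f = p.fn := funext hf
    rw [this]
    exact fn_mem p
  · intro h
    refine strict (by omega) i v fun f hf => ?_
    have : f ∈ {f : ℝ → ℝ | IsReLU2 n1 n2 f} := hf
    rw [← h] at this
    exact this
end
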